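/- There exists a constant C > 0 such that for every L > C, the heat maximal function of f_L = χ_{R_L} − χ_{R₀} satisfies ‖M f_L‖₁ ≤ C log log L. -/

import Mathlib

open MeasureTheory Real Filter Set
open scoped ENNReal

noncomputable section

/-- The group `G = ℝ² ⋊ ℝ⁺`, realized as triples `(x₁, x₂, a)` (only `a > 0` is relevant). -/
abbrev G : Type := ℝ × ℝ × ℝ

/-- Group product `(x₁,x₂,a)·(x₁',x₂',a') = (x₁+a x₁', x₂+a x₂', a a')`. -/
def gMul (x y : G) : G := (x.1 + x.2.2 * y.1, x.2.1 + x.2.2 * y.2.1, x.2.2 * y.2.2)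

/-- Group inverse `(x₁,x₂,a)⁻¹ = (−x₁/a, −x₂/a, 1/a)`. -/
def gInv (x : G) : G := (-x.1 / x.2.2, -x.2.1 / x.2.2, 1 / x.2.2)

/-- The identity `e = (0,0,1)`. -/
def gE : G := (0, 0, 1)

/-- The right Haar measure `dρ = a⁻¹ dx₁ dx₂ da` (supported where `a > 0`). -/
def ρG : Measure G :=
  (volume : Measure G).withDensity fun x => ENNReal.ofReal (if 0 < x.2.2 then x.2.2⁻¹ else 0)

/-- The modular function `δ(x₁,x₂,a) = a⁻²`. -/
def deltaG (x : G) : ℝ := (x.2.2 ^ 2)⁻¹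

/-- `|x| = √(x₁² + x₂²)`. -/
def normG (x : G) : ℝ := Real.sqrt (x.1 ^ 2 + x.2.1 ^ 2)

/-- `cosh r(x) = (a + a⁻¹ + a⁻¹|x|²)/2`. -/
def coshArg (x : G) : ℝ := (x.2.2 + x.2.2⁻¹ + x.2.2⁻¹ * (x.1 ^ 2 + x.2.1 ^ 2)) / 2

/-- `r(x) ≥ 0` is determined by `cosh r(x) = coshArg x`; explicitly `r = arcosh (coshArg x)`. -/
def rG (x : G) : ℝ := Real.log (coshArg x + Real.sqrt (coshArg x ^ 2 - 1))

/-- The left-invariant distance `d(x,y) = r(x⁻¹y)`. -/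
def dG (x y : G) : ℝ := rG (gMul (gInv x) y)

/-- The heat kernel
`p_t(x) = (8π^{3/2})⁻¹ δ(x)^{1/2} (r(x)/sinh r(x)) t^{−3/2} exp(−r(x)²/(4t))`,
with `r/sinh r := 1` at `x = e`. -/
def heatK (t : ℝ) (x : G) : ℝ :=
  (8 * Real.pi ^ ((3 : ℝ)/2))⁻¹ * Real.sqrt (deltaG x) *
    (if rG x = 0 then 1 else rG x / Real.sinh (rG x)) *
    t ^ (-(3 : ℝ)/2) * Real.exp (-(rG x ^ 2) / (4 * t))

/-- Convolution `f ∗ p_t(x) = ∫ f(xy⁻¹) p_t(y) dρ(y)`. -/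
def convHeat (f : G → ℝ) (t : ℝ) (x : G) : ℝ := ∫ y, f (gMul x (gInv y)) * heatK t y ∂ρG

/-- The heat maximal operator `Mf(x) = sup_{t>0} |f ∗ p_t(x)|` (valued in `ℝ≥0∞`). -/
def maxHeat (f : G → ℝ) (x : G) : ℝ≥0∞ :=
  ⨆ (t : ℝ) (_ : 0 < t), ENNReal.ofReal |convHeat f t x|

/-- Calderón–Zygmund sets. -/
def IsCZ (R : Set G) : Prop :=
  ∃ c : G, ∃ L r : ℝ, 0 < c.2.2 ∧ 0 < L ∧ 0 < r ∧
    R = Set.Icc (c.1 - L/2) (c.1 + L/2) ×ˢ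
        (Set.Icc (c.2.1 - L/2) (c.2.1 + L/2) ×ˢ
         Set.Icc (c.2.2 * Real.exp (-r)) (c.2.2 * Real.exp r)) ∧
    (r < 1 → Real.exp 2 * c.2.2 * r ≤ L ∧ L < Real.exp 8 * c.2.2 * r) ∧
    (1 ≤ r → c.2.2 * Real.exp (2*r) ≤ L ∧ L < c.2.2 * Real.exp (8*r))

/-- Atoms: `A ∈ L¹(ρ)` supported in a Calderón–Zygmund set `R`, with
`‖A‖_∞ ≤ ρ(R)⁻¹` and `∫ A dρ = 0`. -/
def IsAtomG (A : G → ℝ) : Prop :=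
  Integrable A ρG ∧
  ∃ R : Set G, IsCZ R ∧ (∀ x ∉ R, A x = 0) ∧
    eLpNorm A ⊤ ρG ≤ (ρG R)⁻¹ ∧
    ∫ x, A x ∂ρG = 0

/-- `f = Σ_j lam_j A_j` with atoms `A_j`, `Σ_j |lam_j| < ∞`, converging in `L¹(ρ)`. -/
def IsH1Decomp (f : G → ℝ) (lam : ℕ → ℝ) (A : ℕ → G → ℝ) : Prop :=
  (∀ j, IsAtomG (A j)) ∧ Summable (fun j => |lam j|) ∧
  Tendsto (fun N => eLpNorm (fun x => f x - ∑ j ∈ Finset.range N, lam j * A j x) 1 ρG)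
    atTop (nhds 0)

/-- The Hardy space `H¹`. -/
def MemH1 (f : G → ℝ) : Prop :=
  Integrable f ρG ∧ ∃ lam A, IsH1Decomp f lam A

/-- `‖f‖_{H¹} = inf Σ_j |lam_j|` over all atomic decompositions. -/
def H1norm (f : G → ℝ) : ℝ :=
  sInf {s | ∃ lam A, IsH1Decomp f lam A ∧ s = ∑' j, |lam j|}

/-- The left-invariant vector field `X₀ = a ∂_a`. -/
def X0 (f : G → ℝ) (x : G) : ℝ := x.2.2 * deriv (fun s => f (x.1, x.2.1, s)) x.2.2

/-- The left-invariant vector field `X₁ = a ∂_{x₁}`. -/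
def X1 (f : G → ℝ) (x : G) : ℝ := x.2.2 * deriv (fun s => f (s, x.2.1, x.2.2)) x.1

/-- The left-invariant vector field `X₂ = a ∂_{x₂}`. -/
def X2 (f : G → ℝ) (x : G) : ℝ := x.2.2 * deriv (fun s => f (x.1, s, x.2.2)) x.2.1

/-- `‖∇p_t(x)‖`, the Euclidean norm of `(X₀p_t, X₁p_t, X₂p_t)` at `x`. -/
def gradHeatNorm (t : ℝ) (x : G) : ℝ :=
  Real.sqrt (X0 (heatK t) x ^ 2 + X1 (heatK t) x ^ 2 + X2 (heatK t) x ^ 2)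

/-- The Poisson kernel `q_t(x) = π⁻² δ(x)^{1/2} (r(x)/sinh r(x)) · t/(t²+r(x)²)²`. -/
def poissonK (t : ℝ) (x : G) : ℝ :=
  (Real.pi ^ 2)⁻¹ * Real.sqrt (deltaG x) *
    (if rG x = 0 then 1 else rG x / Real.sinh (rG x)) *
    (t / (t ^ 2 + rG x ^ 2) ^ 2)

/-- Convolution `f ∗ q_t(x) = ∫ f(xy⁻¹) q_t(y) dρ(y)`. -/
def convPoisson (f : G → ℝ) (t : ℝ) (x : G) : ℝ := ∫ y, f (gMul x (gInv y)) * poissonK t y ∂ρG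

/-- The Poisson maximal operator `M̃f(x) = sup_{t>0} |f ∗ q_t(x)|`. -/
def maxPoisson (f : G → ℝ) (x : G) : ℝ≥0∞ :=
  ⨆ (t : ℝ) (_ : 0 < t), ENNReal.ofReal |convPoisson f t x|

/-- `G_{r₁}(x) = sup_{z ∈ B(x,r₁/2)} sup_{t>0} ‖∇p_t(z)‖`. -/
def Gsup (r1 : ℝ) (x : G) : ℝ≥0∞ :=
  ⨆ (z : G) (_ : 0 < z.2.2 ∧ dG x z < r1 / 2) (t : ℝ) (_ : 0 < t),
    ENNReal.ofReal (gradHeatNorm t z)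

/-- `R₀ = [−1,1]×[−1,1]×[e⁻¹,e]`. -/
def R0set : Set G :=
  Set.Icc (-1 : ℝ) 1 ×ˢ (Set.Icc (-1 : ℝ) 1 ×ˢ Set.Icc (Real.exp (-1)) (Real.exp 1))

/-- `R_L = [L−1,L+1]×[−1,1]×[e⁻¹,e]`. -/
def RLset (L : ℝ) : Set G :=
  Set.Icc (L - 1) (L + 1) ×ˢ (Set.Icc (-1 : ℝ) 1 ×ˢ Set.Icc (Real.exp (-1)) (Real.exp 1))

/-- `f_L = χ_{R_L} − χ_{R₀}`. -/
def fL (L : ℝ) : G → ℝ := fun x =>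
  (RLset L).indicator (fun _ => (1 : ℝ)) x - R0set.indicator (fun _ => (1 : ℝ)) x

/-- The mean of `g` over `R` with respect to `ρ`. -/
def czMean (g : G → ℝ) (R : Set G) : ℝ := (∫ x in R, g x ∂ρG) / (ρG R).toReal

/-- `‖g‖_{BMO} = sup_R ρ(R)⁻¹ ∫_R |g − g_R| dρ` over Calderón–Zygmund sets `R`. -/
def czBMO (g : G → ℝ) : ℝ≥0∞ :=
  ⨆ (R : Set G) (_ : IsCZ R),
    (ρG R)⁻¹ * ∫⁻ x in R, ENNReal.ofReal |g x - czMean g R| ∂ρG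

/-- `‖h‖_{BMO(ℝ)} = sup_Q |Q|⁻¹ ∫_Q |h − h_Q|` over bounded intervals `Q ⊂ ℝ`. -/
def lineBMO (h : ℝ → ℝ) : ℝ≥0∞ :=
  ⨆ (a : ℝ) (b : ℝ) (_ : a < b),
    (ENNReal.ofReal (b - a))⁻¹ *
      ∫⁻ s in Set.Icc a b, ENNReal.ofReal |h s - (∫ u in Set.Icc a b, h u) / (b - a)|

/-- `2R₀ = [−2,2]×[−2,2]×[e⁻²,e²]`. -/
def twoR0set : Set G :=
  Set.Icc (-2 : ℝ) 2 ×ˢ (Set.Icc (-2 : ℝ) 2 ×ˢ Set.Icc (Real.exp (-2)) (Real.exp 2))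

/-- The set `{x₁ > 3, |x₂| < 1, e⁻¹ < a < e}`. -/
def domSpecial : Set G :=
  {x : G | 3 < x.1 ∧ |x.2.1| < 1 ∧ Real.exp (-1) < x.2.2 ∧ x.2.2 < Real.exp 1}

/-- The function equal to `1/(x₁ (log x₁)^{3/2})` on `{x₁ > 3, |x₂| < 1, e⁻¹ < a < e}`,
to `c₀` on `R₀`, and `0` elsewhere. -/
def fSpecial (c0 : ℝ) : G → ℝ := fun x =>
  domSpecial.indicator (fun y => (y.1 * Real.log y.1 ^ ((3 : ℝ)/2))⁻¹) x
    + R0set.indicator (fun _ => c0) x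


lemma rG_eq (y : G) : rG y = Real.arcosh (coshArg y) := rfl

lemma rpow_neg_three_half {t : ℝ} (ht : 0 < t) : t ^ (-(3:ℝ)/2) = (√t ^ 3)⁻¹ := by
  rw [neg_div, Real.rpow_neg ht.le, Real.sqrt_eq_rpow, ← Real.rpow_natCast, ← Real.rpow_mul ht.le]
  norm_num

/-- the time factor -/
def tf (t r : ℝ) : ℝ := t ^ (-(3:ℝ)/2) * Real.exp (-(r^2) / (4*t))

lemma tf_nonneg {t r : ℝ} (ht : 0 < t) : 0 ≤ tf t r := by unfold tf; positivity

lemma tf_eq {t r : ℝ} (ht : 0 < t) : tf t r = (√t ^ 3)⁻¹ * Real.exp (-((r/√t)^2/4)) := by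
  rw [tf, rpow_neg_three_half ht]
  congr 2
  rw [div_pow, Real.sq_sqrt ht.le]; field_simp

lemma cube_le (s : ℝ) (hs : 0 ≤ s) : s^3 ≤ 33 * Real.exp (s^2/4) := by
  have h := Real.pow_div_factorial_le_exp (x := s^2/4) (by positivity) 2
  have h1 := Real.one_le_exp (x := s^2/4) (by positivity)
  have : s^3 ≤ 1 + s^4 := by nlinarith [sq_nonneg (s^2 - s), sq_nonneg (s-1), sq_nonneg (s^2-1), mul_nonneg hs (sq_nonneg (s-1))]
  norm_num [Nat.factorial] at h
  nlinarith

lemma fifth_le (s : ℝ) (hs : 0 ≤ s) : s^5 ≤ 385 * Real.exp (s^2/4) := by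
  have h := Real.pow_div_factorial_le_exp (x := s^2/4) (by positivity) 3
  have h1 := Real.one_le_exp (x := s^2/4) (by positivity)
  have : s^5 ≤ 1 + s^6 := by
    rcases le_total s 1 with h2 | h2
    · have := pow_le_one₀ hs h2 (n := 5)
      have : 0 ≤ s^6 := by positivity
      linarith
    · have := pow_le_pow_right₀ h2 (show 5 ≤ 6 by norm_num)
      linarith
  norm_num [Nat.factorial] at h
  nlinarith

lemma tf_le {t r : ℝ} (ht : 0 < t) (hr : 0 < r) : tf t r ≤ 33 / r^3 := by
  rw [tf_eq ht]
  have hq := Real.sqrt_pos.2 ht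
  have h := cube_le (r/√t) (by positivity)
  rw [Real.exp_neg, le_div_iff₀ (by positivity)]
  rw [div_pow, div_le_iff₀ (by positivity)] at h
  rw [mul_assoc, ← div_eq_inv_mul, div_le_iff₀ (by positivity), ← div_eq_inv_mul, div_le_iff₀ (by positivity)]
  linarith

lemma tf_div_le {t r : ℝ} (ht : 0 < t) (hr : 0 < r) : tf t r / t ≤ 385 / r^5 := by
  rw [tf_eq ht]
  have hq := Real.sqrt_pos.2 ht
  have h := fifth_le (r/√t) (by positivity)
  have h5 : √t^5 = √t^3 * t := by
    nth_rewrite 3 [← Real.sq_sqrt ht.le]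
    ring
  rw [Real.exp_neg, le_div_iff₀ (by positivity)]
  rw [div_pow, div_le_iff₀ (by positivity), h5] at h
  have e : (√t ^ 3)⁻¹ * (Real.exp ((r / √t) ^ 2 / 4))⁻¹ / t * r ^ 5 = r^5 / (Real.exp ((r / √t) ^ 2 / 4) * (√t^3 * t)) := by
    field_simp
  rw [e, div_le_iff₀ (by positivity)]
  linarith

/-- radial part as a function of `D = cosh r`, `D > 1`. -/
def HH (t D : ℝ) : ℝ := (Real.arcosh D / √(D^2-1)) * tf t (Real.arcosh D)

lemma log_le_arcosh {D : ℝ} (hD : 1 ≤ D) : Real.log D ≤ Real.arcosh D := by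
  unfold Real.arcosh
  apply Real.log_le_log (by linarith)
  linarith [Real.sqrt_nonneg (D^2-1)]

lemma half_le_sqrt {D : ℝ} (hD : 2 ≤ D) : D/2 ≤ √(D^2-1) := by
  apply Real.le_sqrt_of_sq_le; nlinarith

lemma one_le_log {D : ℝ} (hD : 3 ≤ D) : 1 ≤ Real.log D := by
  rw [Real.le_log_iff_exp_le (by linarith)]
  linarith [Real.exp_one_lt_d9]

lemma HH_nonneg {t D : ℝ} (ht : 0 < t) (hD : 1 ≤ D) : 0 ≤ HH t D := by
  unfold HH
  have := Real.arcosh_nonneg hD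
  have := tf_nonneg (r := Real.arcosh D) ht
  positivity

lemma HH_le {t D : ℝ} (ht : 0 < t) (hD : 3 ≤ D) : HH t D ≤ 66 / (D * Real.log D ^ 2) := by
  have h1 := one_le_log hD
  have h2 := log_le_arcosh (D := D) (by linarith)
  have h3 := half_le_sqrt (D := D) (by linarith)
  set r := Real.arcosh D
  have hr : 0 < r := by linarith
  calc HH t D ≤ (r / (D/2)) * (33 / r^3) := by
        unfold HH
        gcongr
        · exact tf_nonneg ht
        · exact tf_le ht hr
    _ = 66 / (D * r^2) := by field_simp; norm_num
    _ ≤ _ := by gcongr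

lemma HH_deriv {t D : ℝ} (ht : 0 < t) (hD : 3 ≤ D) :
    ∃ d, HasDerivAt (HH t) d D ∧ |d| ≤ 2000 / (D^2 * Real.log D ^ 2) := by
  have h1 := one_le_log hD
  have h2 := log_le_arcosh (D := D) (by linarith)
  have h3 := half_le_sqrt (D := D) (by linarith)
  have hD1 : D ∈ Ioi (1:ℝ) := by simp; linarith
  have ha := Real.hasDerivAt_arcosh hD1
  have hs0 : 0 < √(D^2-1) := by linarith
  have hsq : HasDerivAt (fun D : ℝ => √(D^2-1)) (D / √(D^2-1)) D := by
    have := ((hasDerivAt_pow 2 D).sub_const 1).sqrt (by nlinarith)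
    convert this using 1
    field_simp
    push_cast; ring
  have hexp : HasDerivAt (fun D => tf t (Real.arcosh D)) (t ^ (-(3:ℝ)/2) * (Real.exp (-(Real.arcosh D^2) / (4*t)) * (-(2 * Real.arcosh D * (√(D^2-1))⁻¹) / (4*t)))) D := by
    unfold tf
    apply HasDerivAt.const_mul
    apply HasDerivAt.exp
    apply HasDerivAt.div_const
    apply HasDerivAt.fun_neg
    have := ha.fun_pow 2
    simpa using this
  have hH := (ha.fun_div hsq hs0.ne').fun_mul hexp
  refine ⟨_, hH, ?_⟩
  set r := Real.arcosh D
  set s := √(D^2-1)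
  have hr : 0 < r := by linarith
  have hA := tf_nonneg (r := r) ht
  have hA1 := tf_le ht hr
  have hA2 := tf_div_le ht hr
  have e : (s⁻¹ * s - r * (D / s)) / s ^ 2 * tf t r + r / s * (t ^ (-(3:ℝ) / 2) * (Real.exp (-r ^ 2 / (4 * t)) * (-(2 * r * s⁻¹) / (4 * t))))
      = (s^2)⁻¹ * (tf t r - (D/s) * (r * tf t r) - r^2 / 2 * (tf t r/t)) := by
    unfold tf; field_simp; ring
  rw [e, abs_mul, abs_of_pos (by positivity : 0 < (s^2)⁻¹)]
  have hDs : D/s ≤ 2 := by rw [div_le_iff₀ hs0]; linarith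
  have hDs0 : 0 ≤ D/s := by apply div_nonneg <;> linarith
  have hr1 : 1 ≤ r := by linarith
  have b1 : tf t r ≤ 33/r^2 := hA1.trans (by gcongr <;> norm_num; )
  have b2 : r * tf t r ≤ 33/r^2 := by
    calc r * tf t r ≤ r * (33/r^3) := by gcongr
      _ = _ := by field_simp
  have b3 : r^2/2 * (tf t r/t) ≤ 193/r^2 := by
    calc r^2/2 * (tf t r/t) ≤ r^2/2*(385/r^5) := by gcongr
      _ = 192.5/r^3 := by field_simp; norm_num
      _ ≤ 193/r^2 := by gcongr <;> norm_num
  have b4 : 0 ≤ r^2/2 * (tf t r/t) := by positivity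
  have b5 : 0 ≤ r * tf t r := by positivity
  have b6 : D/s * (r * tf t r) ≤ 2 * (33/r^2) := by gcongr
  have b7 : 0 ≤ D/s * (r * tf t r) := by positivity
  have b8 : 0 < 1/r^2 := by positivity
  have key : |tf t r - (D/s) * (r * tf t r) - r^2 / 2 * (tf t r/t)| ≤ 500/r^2 := by
    have e1 : 33/r^2 = 33*(1/r^2) := by ring
    have e2 : 193/r^2 = 193*(1/r^2) := by ring
    have e3 : 500/r^2 = 500*(1/r^2) := by ring
    rw [e3, abs_le]; rw [e1] at b1 b6; rw [e2] at b3
    constructor <;> linarith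
  calc _ ≤ ((D/2)^2)⁻¹ * (500/r^2) := by gcongr
    _ = 2000 / (D^2*r^2) := by field_simp; norm_num
    _ ≤ _ := by gcongr

lemma HH_sub_le {t m D D' : ℝ} (ht : 0 < t) (hm : 3 ≤ m) (h : m ≤ D) (h' : m ≤ D') :
    |HH t D - HH t D'| ≤ 2000 / (m^2 * Real.log m ^ 2) * |D - D'| := by
  have hc : ∀ x ∈ Ici m, ∃ d, HasDerivAt (HH t) d x ∧ |d| ≤ 2000 / (x^2 * Real.log x ^ 2) :=
    fun x hx => HH_deriv ht (hm.trans hx)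
  choose! d hd hb using hc
  have hl := one_le_log hm
  have := Convex.norm_image_sub_le_of_norm_hasDerivWithin_le (f := HH t) (f' := d) (s := Ici m)
    (C := 2000 / (m^2 * Real.log m ^ 2)) (x := D') (y := D)
    (fun x hx => (hd x hx).hasDerivWithinAt) (fun x hx => by
      refine (hb x hx).trans ?_
      have hx' : m ≤ x := hx
      have : Real.log m ≤ Real.log x := Real.log_le_log (by linarith) hx
      gcongr) (convex_Ici m) h' h
  simpa using this

/-- density of `ρG` in the last variable -/
def dens (b : ℝ) : ℝ := if 0 < b then b⁻¹ else 0

lemma dens_nonneg (b : ℝ) : 0 ≤ dens b := by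
  unfold dens; split_ifs with h
  · positivity
  · exact le_rfl

@[fun_prop]
lemma measurable_dens : Measurable dens :=
  Measurable.ite measurableSet_Ioi measurable_inv measurable_const

lemma ρG_eq : ρG = (volume : Measure G).withDensity fun x => ENNReal.ofReal (dens x.2.2) := rfl

lemma lintegral_ρG (f : G → ℝ≥0∞) (hf : Measurable f) :
    ∫⁻ x, f x ∂ρG = ∫⁻ x : G, ENNReal.ofReal (dens x.2.2) * f x := by
  rw [ρG_eq, lintegral_withDensity_eq_lintegral_mul _ (by fun_prop) hf]
  rfl

lemma integral_ρG (f : G → ℝ) : ∫ x, f x ∂ρG = ∫ x : G, dens x.2.2 * f x := by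
  rw [ρG_eq, integral_withDensity_eq_integral_toReal_smul (by fun_prop) (by simp)]
  congr 1; ext x
  rw [ENNReal.toReal_ofReal (dens_nonneg _), smul_eq_mul]

lemma ae_pos_ρG : ∀ᵐ x ∂ρG, 0 < x.2.2 := by
  rw [ρG_eq, ae_withDensity_iff (by fun_prop)]
  filter_upwards with x hx
  by_contra h
  apply hx
  simp [dens, h]

/-- The set of `y` with `x y⁻¹ ∈ R₀`, `y.2.2 > 0`. -/
def EE (x : G) : Set G := {y | 0 < y.2.2 ∧ gMul x (gInv y) ∈ R0set}

lemma measurable_gdiv (x : G) : Measurable fun y => gMul x (gInv y) := by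
  unfold gMul gInv; fun_prop

lemma measurableSet_R0 : MeasurableSet R0set := by
  unfold R0set; measurability

lemma measurableSet_EE (x : G) : MeasurableSet (EE x) := by
  apply MeasurableSet.inter
  · exact measurableSet_lt (f := fun _ : G => (0:ℝ)) (g := fun y : G => y.2.2) measurable_const (by fun_prop)
  · exact measurable_gdiv x measurableSet_R0

lemma e_lt : Real.exp 1 < 3 := by linarith [Real.exp_one_lt_d9]
lemma em_gt : 1/3 < Real.exp (-1) := by
  rw [Real.exp_neg, one_div]
  exact inv_strictAnti₀ (Real.exp_pos _) e_lt

/-- coordinates -/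
lemma EE_coord {x y : G} (ha : 0 < x.2.2) (hy : y ∈ EE x) :
    0 < y.2.2 ∧ |x.1 - x.2.2 / y.2.2 * y.1| ≤ 1 ∧ |x.2.1 - x.2.2/y.2.2 * y.2.1| ≤ 1 ∧
      1/3 ≤ x.2.2 / y.2.2 ∧ x.2.2/y.2.2 ≤ 3 := by
  obtain ⟨h0, h⟩ := hy
  simp only [gMul, gInv, R0set, Set.mem_prod, Set.mem_Icc] at h
  obtain ⟨⟨h1, h2⟩, ⟨h3, h4⟩, h5, h6⟩ := h
  have := e_lt
  have := em_gt
  have e1 : x.2.2 * (-y.1/y.2.2) = - (x.2.2/y.2.2*y.1) := by ring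
  have e2 : x.2.2 * (-y.2.1/y.2.2) = - (x.2.2/y.2.2*y.2.1) := by ring
  have e3 : x.2.2 * (1/y.2.2) = (x.2.2/y.2.2) := by ring
  rw [e1] at h1 h2; rw [e2] at h3 h4; rw [e3] at h5 h6
  refine ⟨h0, abs_le.2 ⟨by linarith, by linarith⟩, abs_le.2 ⟨by linarith, by linarith⟩, by linarith, by linarith⟩

lemma vol_strip {c u : ℝ} (hc : 1/3 ≤ c) :
    ∫⁻ y : ℝ, Set.indicator {y : ℝ | |u - c*y| ≤ 1} (fun _ => (1:ℝ≥0∞)) y ≤ 6 := by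
  have hc0 : 0 < c := by linarith
  have hs : {y : ℝ | |u - c*y| ≤ 1} ⊆ Icc ((u-1)/c) ((u+1)/c) := by
    intro y hy
    simp only [Set.mem_ofPred_eq, abs_le] at hy
    rw [mem_Icc, div_le_iff₀ hc0, le_div_iff₀ hc0]
    constructor <;> linarith
  calc _ ≤ ∫⁻ y : ℝ, Set.indicator (Icc ((u-1)/c) ((u+1)/c)) (fun _ => (1:ℝ≥0∞)) y := by
        apply lintegral_mono
        exact Set.indicator_le_indicator_of_subset hs (fun _ => zero_le_one)
    _ = volume (Icc ((u-1)/c) ((u+1)/c)) := by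
        rw [lintegral_indicator measurableSet_Icc]; simp
    _ = ENNReal.ofReal (2/c) := by rw [Real.volume_Icc]; congr 1; ring
    _ ≤ ENNReal.ofReal 6 := by
        apply ENNReal.ofReal_le_ofReal
        rw [div_le_iff₀ hc0]; linarith
    _ = 6 := by simp

lemma ρG_EE {x : G} (ha : 0 < x.2.2) : ρG (EE x) ≤ 288 := by
  set a := x.2.2 with hadef
  let A : ℝ × ℝ → Set ℝ := fun q => {y : ℝ | |q.1 - a/q.2*y| ≤ 1}
  have hA : ∀ u : ℝ, Measurable fun p : ℝ × ℝ => (A (u, p.2)).indicator (fun _ => (1:ℝ≥0∞)) p.1 := by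
    intro u
    have : (fun p : ℝ × ℝ => (A (u, p.2)).indicator (fun _ => (1:ℝ≥0∞)) p.1)
        = Set.indicator {p : ℝ × ℝ | |u - a/p.2*p.1| ≤ 1} (fun _ => 1) := by
      ext p; simp [Set.indicator, A]
    rw [this]
    apply measurable_const.indicator
    exact measurableSet_le (by fun_prop) measurable_const
  let B : Set ℝ := Icc (a/3) (3*a)
  have hB : Measurable (B.indicator (fun _ => ENNReal.ofReal (3/a))) :=
    measurable_const.indicator measurableSet_Icc
  have bnd : ∀ y : G, ENNReal.ofReal (dens y.2.2) * (EE x).indicator 1 y ≤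
      (A (x.1, y.2.2)).indicator (fun _ => (1:ℝ≥0∞)) y.1 * ((A (x.2.1, y.2.2)).indicator (fun _ => (1:ℝ≥0∞)) y.2.1
        * B.indicator (fun _ => ENNReal.ofReal (3/a)) y.2.2) := by
    intro y
    by_cases hy : y ∈ EE x
    · obtain ⟨h0, h1, h2, h3, h4⟩ := EE_coord ha hy
      rw [Set.indicator_of_mem hy, Set.indicator_of_mem (show y.1 ∈ A (x.1, y.2.2) from h1),
        Set.indicator_of_mem (show y.2.1 ∈ A (x.2.1, y.2.2) from h2), Set.indicator_of_mem]
      · simp only [Pi.one_apply, mul_one, one_mul]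
        apply ENNReal.ofReal_le_ofReal
        rw [dens, if_pos h0, inv_eq_one_div, div_le_div_iff₀ h0 ha]
        rw [div_le_iff₀ h0] at h4
        linarith
      · rw [div_le_iff₀ h0] at h4
        rw [le_div_iff₀ h0] at h3
        constructor <;> linarith
    · simp [hy]
  have hstrip : ∀ u b : ℝ, b ∈ B → ∫⁻ y, (A (u, b)).indicator (fun _ => (1:ℝ≥0∞)) y ≤ 6 := by
    intro u b hb
    have hb0 : 0 < b := by have := hb.1; linarith [div_pos ha (by norm_num : (0:ℝ) < 3)]
    apply vol_strip
    rw [le_div_iff₀ hb0]; linarith [hb.2]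
  calc ρG (EE x) = ∫⁻ y, (EE x).indicator 1 y ∂ρG := (lintegral_indicator_one (measurableSet_EE x)).symm
    _ = ∫⁻ y : G, ENNReal.ofReal (dens y.2.2) * (EE x).indicator 1 y := 
        lintegral_ρG _ (measurable_one.indicator (measurableSet_EE x))
    _ ≤ _ := lintegral_mono bnd
    _ = ∫⁻ q : ℝ × ℝ, ∫⁻ y1 : ℝ, (A (x.1, q.2)).indicator (fun _ => (1:ℝ≥0∞)) y1 * ((A (x.2.1, q.2)).indicator (fun _ => (1:ℝ≥0∞)) q.1
        * B.indicator (fun _ => ENNReal.ofReal (3/a)) q.2) := by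
        rw [Measure.volume_eq_prod, lintegral_prod_symm']
        apply Measurable.mul
        · exact (hA x.1).comp (f := fun y : G => (y.1, y.2.2)) (by fun_prop)
        · apply Measurable.mul
          · exact (hA x.2.1).comp (f := fun y : G => (y.2.1, y.2.2)) (by fun_prop)
          · exact hB.comp (f := fun y : G => (y.2.2)) (by fun_prop)
    _ ≤ ∫⁻ q : ℝ × ℝ, 6 * ((A (x.2.1, q.2)).indicator (fun _ => (1:ℝ≥0∞)) q.1
        * B.indicator (fun _ => ENNReal.ofReal (3/a)) q.2) := by
        apply lintegral_mono
        intro q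
        dsimp only
        by_cases hq : q.2 ∈ B
        · have hm : Measurable ((A (x.1, q.2)).indicator (fun _ => (1:ℝ≥0∞))) :=
            ((hA x.1).comp (f := fun y : ℝ => (y, q.2)) (by fun_prop))
          rw [lintegral_mul_const _ hm]
          gcongr
          exact hstrip _ _ hq
        · simp [hq]
    _ = ∫⁻ b : ℝ, ∫⁻ y2 : ℝ, 6 * ((A (x.2.1, b)).indicator (fun _ => (1:ℝ≥0∞)) y2
        * B.indicator (fun _ => ENNReal.ofReal (3/a)) b) := by
        rw [Measure.volume_eq_prod, lintegral_prod_symm']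
        apply measurable_const.mul
        apply Measurable.mul
        · exact (hA x.2.1)
        · exact hB.comp measurable_snd
    _ ≤ ∫⁻ b : ℝ, 6 * (6 * B.indicator (fun _ => ENNReal.ofReal (3/a)) b) := by
        apply lintegral_mono
        intro b
        dsimp only
        by_cases hq : b ∈ B
        · have hm : Measurable ((A (x.2.1, b)).indicator (fun _ => (1:ℝ≥0∞))) := ((hA x.2.1).comp (f := fun y : ℝ => (y, b)) (by fun_prop))
          rw [lintegral_const_mul _ (hm.mul_const _), lintegral_mul_const _ hm]
          gcongr
          exact hstrip _ _ hq
        · simp [hq]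
    _ = 36 * (ENNReal.ofReal (3/a) * ENNReal.ofReal (3*a - a/3)) := by
        rw [lintegral_const_mul _ (hB.const_mul _), lintegral_const_mul _ hB, lintegral_indicator measurableSet_Icc]
        simp only [lintegral_const, MeasurableSet.univ, Measure.restrict_apply, univ_inter, B, Real.volume_Icc]
        rw [← mul_assoc]; norm_num
    _ = 288 := by
        rw [← ENNReal.ofReal_mul (by positivity)]
        have : 3/a*(3*a-a/3) = 8 := by field_simp; norm_num
        rw [this]; norm_num

/-- `3 + a² + |x|²` -/
def WW (x : G) : ℝ := 3 + x.2.2^2 + (x.1^2 + x.2.1^2)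

def QQ (x : G) : ℝ := WW x / x.2.2

lemma coshArg_eq {y : G} (hb : 0 < y.2.2) :
    coshArg y = 1 + ((y.2.2-1)^2 + y.1^2 + y.2.1^2) / (2*y.2.2) := by
  unfold coshArg; field_simp; ring

lemma one_le_coshArg {y : G} (hb : 0 < y.2.2) : 1 ≤ coshArg y := by
  rw [coshArg_eq hb]
  have : 0 ≤ ((y.2.2-1)^2 + y.1^2 + y.2.1^2) / (2*y.2.2) := by positivity
  linarith

lemma EE_cosh {x y : G} (ha : 0 < x.2.2) (hy : y ∈ EE x) :
    QQ x ≤ 378 * coshArg y ∧ coshArg y ≤ 8 * QQ x := by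
  obtain ⟨h0, h1, h2, h3, h4⟩ := EE_coord ha hy
  obtain ⟨x1, x2, a⟩ := x
  obtain ⟨y1, y2, b⟩ := y
  simp only [QQ, WW, coshArg] at *
  obtain ⟨c, hc⟩ : ∃ c, c = a / b := ⟨_, rfl⟩
  rw [← hc] at h1 h2 h3 h4
  have hc0 : 0 < c := by linarith
  have hb : b = a / c := by rw [hc]; field_simp
  have e : (b + b⁻¹ + b⁻¹ * (y1^2+y2^2))/2 = (a^2 + c^2 + (c*y1)^2 + (c*y2)^2) / (2*(a*c)) := by
    rw [hb]; field_simp; ring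
  rw [e]
  clear e
  obtain ⟨z1, hz1⟩ : ∃ z1, z1 = x1 - c*y1 := ⟨_, rfl⟩
  obtain ⟨z2, hz2⟩ : ∃ z2, z2 = x2 - c*y2 := ⟨_, rfl⟩
  have e1 : c*y1 = x1 - z1 := by linarith
  have e2 : c*y2 = x2 - z2 := by linarith
  rw [← hz1] at h1; rw [← hz2] at h2
  rw [e1, e2]
  have q1 : z1^2 ≤ 1 := by rw [sq_le_one_iff_abs_le_one]; exact h1
  have q2 : z2^2 ≤ 1 := by rw [sq_le_one_iff_abs_le_one]; exact h2
  have c1 : 1/9 ≤ c^2 := by nlinarith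
  have c2 : c^2 ≤ 9 := by nlinarith
  constructor
  · rw [← mul_div_assoc, div_le_div_iff₀ ha (by positivity)]
    have k : 3 + a^2 + (x1^2+x2^2) ≤ 63*(a^2 + c^2 + (x1-z1)^2+(x2-z2)^2) := by
      nlinarith [sq_nonneg (x1 - 2*z1), sq_nonneg (x2-2*z2), sq_nonneg (x1-z1), sq_nonneg (x2-z2), sq_nonneg a]
    have k0 : 0 ≤ (a^2 + c^2 + (x1-z1)^2+(x2-z2)^2) := by positivity
    calc (3 + a^2 + (x1^2+x2^2)) * (2*(a*c)) ≤ (63*(a^2 + c^2 + (x1-z1)^2+(x2-z2)^2)) * (2*(a*3)) := by gcongr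
      _ = _ := by ring
  · rw [← mul_div_assoc, div_le_div_iff₀ (by positivity) ha]
    have k : (a^2 + c^2 + (x1-z1)^2+(x2-z2)^2) ≤ 5*(3 + a^2 + (x1^2+x2^2)) := by
      nlinarith [sq_nonneg (x1 + z1), sq_nonneg (x2 + z2), sq_nonneg a, sq_nonneg x1, sq_nonneg x2]
    have k0 : 0 ≤ 3 + a^2 + (x1^2+x2^2) := by positivity
    calc (a^2 + c^2 + (x1-z1)^2+(x2-z2)^2) * a ≤ 5*(3 + a^2 + (x1^2+x2^2)) * a := by gcongr
      _ ≤ 8 * (3 + a^2 + (x1^2+x2^2)) * (2 * (a * (1/3))) := by nlinarith [mul_nonneg k0 ha.le]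
      _ ≤ _ := by gcongr

lemma c0_pos : 0 < (8 * Real.pi ^ ((3 : ℝ)/2))⁻¹ := by positivity

lemma c0_le : (8 * Real.pi ^ ((3 : ℝ)/2))⁻¹ ≤ 1 := by
  apply inv_le_one_of_one_le₀
  have : 1 ≤ Real.pi ^ ((3 : ℝ)/2) := Real.one_le_rpow (by linarith [Real.pi_gt_three]) (by norm_num)
  linarith

lemma sqrt_delta {y : G} (hb : 0 < y.2.2) : √(deltaG y) = y.2.2⁻¹ := by
  unfold deltaG
  rw [← inv_pow, Real.sqrt_sq (by positivity)]

lemma heatK_eq {t : ℝ} {y : G} (hb : 0 < y.2.2) (hD : 1 < coshArg y) :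
    heatK t y = (8 * Real.pi ^ ((3 : ℝ)/2))⁻¹ * (y.2.2⁻¹ * HH t (coshArg y)) := by
  have : rG y ≠ 0 := by rw [rG_eq]; exact (Real.arcosh_pos hD).ne'
  rw [heatK, sqrt_delta hb, if_neg this, HH, tf, ← Real.sinh_arcosh hD.le, ← rG_eq]
  ring

lemma heatK_nonneg {t : ℝ} (ht : 0 < t) {y : G} (hb : 0 < y.2.2) : 0 ≤ heatK t y := by
  have h := Real.arcosh_nonneg (one_le_coshArg hb)
  rw [← rG_eq] at h
  have : 0 ≤ (if rG y = 0 then 1 else rG y / Real.sinh (rG y)) := by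
    split_ifs
    · norm_num
    · exact div_nonneg h (Real.sinh_nonneg_iff.2 h)
  unfold heatK
  positivity

lemma heatK_le {t : ℝ} (ht : 0 < t) {y : G} (hb : 0 < y.2.2) : heatK t y ≤ y.2.2⁻¹ * tf t (rG y) := by
  have h := Real.arcosh_nonneg (one_le_coshArg hb)
  rw [← rG_eq] at h
  have h1 : (if rG y = 0 then 1 else rG y / Real.sinh (rG y)) ≤ 1 := by
    split_ifs with h0
    · norm_num
    · exact div_le_one_of_le₀ (Real.self_le_sinh_iff.2 h) (Real.sinh_nonneg_iff.2 h)
  have h2 : 0 ≤ (if rG y = 0 then 1 else rG y / Real.sinh (rG y)) := by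
    split_ifs
    · norm_num
    · exact div_nonneg h (Real.sinh_nonneg_iff.2 h)
  have htf := tf_nonneg (r := rG y) ht
  have e : heatK t y = (8 * Real.pi ^ ((3 : ℝ)/2))⁻¹ * y.2.2⁻¹ * (if rG y = 0 then 1 else rG y / Real.sinh (rG y)) * tf t (rG y) := by
    rw [heatK, sqrt_delta hb, tf]; ring
  rw [e]
  calc _ ≤ 1 * y.2.2⁻¹ * 1 * tf t (rG y) := by
        gcongr
        exact c0_le
    _ = _ := by ring

lemma tf_le_const {t : ℝ} (ht : 0 < t) (r : ℝ) : tf t r ≤ t ^ (-(3:ℝ)/2) := by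
  unfold tf
  apply mul_le_of_le_one_right (by positivity)
  rw [Real.exp_le_one_iff]
  apply div_nonpos_of_nonpos_of_nonneg
  · nlinarith [sq_nonneg r]
  · linarith

@[fun_prop]
lemma measurable_coshArg : Measurable coshArg := by unfold coshArg; fun_prop

@[fun_prop]
lemma measurable_rG : Measurable rG := by unfold rG; fun_prop

@[fun_prop]
lemma measurable_heatK (t : ℝ) : Measurable (heatK t) := by
  unfold heatK deltaG
  have : Measurable fun x : G => (if rG x = 0 then (1:ℝ) else rG x / Real.sinh (rG x)) := by
    apply Measurable.ite
    · exact measurable_rG (measurableSet_singleton 0)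
    · fun_prop
    · exact measurable_rG.div (Real.continuous_sinh.measurable.comp measurable_rG)
  fun_prop

lemma inv_b_le {x y : G} (ha : 0 < x.2.2) (hy : y ∈ EE x) : y.2.2⁻¹ ≤ 3 / x.2.2 := by
  obtain ⟨h0, -, -, -, h4⟩ := EE_coord ha hy
  rw [div_le_iff₀ h0] at h4
  rw [inv_eq_one_div, div_le_div_iff₀ h0 ha]; linarith

lemma EE_finite {x : G} (ha : 0 < x.2.2) : ρG (EE x) < ⊤ := (ρG_EE ha).trans_lt (by simp)

lemma EE_real {x : G} (ha : 0 < x.2.2) : ρG.real (EE x) ≤ 288 := by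
  have := ENNReal.toReal_mono (by simp) (ρG_EE ha)
  simpa [Measure.real] using this

lemma integrableOn_heatK {t : ℝ} (ht : 0 < t) {x : G} (ha : 0 < x.2.2) :
    IntegrableOn (heatK t) (EE x) ρG := by
  apply Measure.integrableOn_of_bounded (M := 3/x.2.2 * t ^ (-(3:ℝ)/2)) (EE_finite ha).ne
  · exact (measurable_heatK t).aestronglyMeasurable
  · filter_upwards [ae_restrict_mem (measurableSet_EE x)] with y hy
    have hb := hy.1
    rw [Real.norm_of_nonneg (heatK_nonneg ht hb)]
    refine (heatK_le ht hb).trans ?_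
    gcongr
    · exact tf_nonneg ht
    · exact inv_b_le ha hy
    · exact tf_le_const ht _

lemma ind_ae (x : G) (g : G → ℝ) : (fun y => R0set.indicator (fun _ => (1:ℝ)) (gMul x (gInv y)) * g y)
    =ᵐ[ρG] (EE x).indicator g := by
  filter_upwards [ae_pos_ρG] with y hy
  by_cases h : gMul x (gInv y) ∈ R0set
  · rw [Set.indicator_of_mem h, Set.indicator_of_mem (show y ∈ EE x from ⟨hy, h⟩), one_mul]
  · rw [Set.indicator_of_notMem h, Set.indicator_of_notMem (show y ∉ EE x from fun h' => h h'.2), zero_mul]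

/-- translate `x` by `-L e₁`. -/
def tr (L : ℝ) (x : G) : G := (x.1 - L, x.2.1, x.2.2)

lemma RL_ind (L : ℝ) (x w : G) : (RLset L).indicator (fun _ => (1:ℝ)) (gMul x w)
    = R0set.indicator (fun _ => (1:ℝ)) (gMul (tr L x) w) := by
  have : gMul x w ∈ RLset L ↔ gMul (tr L x) w ∈ R0set := by
    simp only [RLset, R0set, gMul, tr, Set.mem_prod, Set.mem_Icc]
    constructor
    · rintro ⟨⟨h1, h2⟩, h3⟩
      exact ⟨⟨by linarith, by linarith⟩, h3⟩
    · rintro ⟨⟨h1, h2⟩, h3⟩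
      exact ⟨⟨by linarith, by linarith⟩, h3⟩
  by_cases h : gMul x w ∈ RLset L
  · rw [Set.indicator_of_mem h, Set.indicator_of_mem (this.1 h)]
  · rw [Set.indicator_of_notMem h, Set.indicator_of_notMem (fun h' => h (this.2 h'))]

/-- `F t x = χ_{R₀} * p_t (x)`. -/
def FF (t : ℝ) (x : G) : ℝ := ∫ y in EE x, heatK t y ∂ρG

lemma conv_fL {t : ℝ} (ht : 0 < t) (L : ℝ) {x : G} (ha : 0 < x.2.2) :
    convHeat (fL L) t x = FF t (tr L x) - FF t x := by
  have ha' : 0 < (tr L x).2.2 := ha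
  unfold FF
  rw [← integral_indicator (measurableSet_EE x), ← integral_indicator (measurableSet_EE _), ← integral_sub]
  · unfold convHeat fL
    apply integral_congr_ae
    filter_upwards [ind_ae x (heatK t), ind_ae (tr L x) (heatK t)] with y h1 h2
    rw [← h1, ← h2, RL_ind]; ring
  · exact (integrableOn_heatK ht ha').integrable_indicator (measurableSet_EE _)
  · exact (integrableOn_heatK ht ha).integrable_indicator (measurableSet_EE _)

/-- pointwise majorant -/
def gg (x : G) : ℝ := 1 / (WW x * Real.log (QQ x) ^ 2)

lemma WW_pos (x : G) : 0 < WW x := by unfold WW; positivity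

lemma three_le_QQ {x : G} (ha : 0 < x.2.2) : 3 ≤ QQ x := by
  unfold QQ WW
  rw [le_div_iff₀ ha]
  nlinarith [sq_nonneg (x.2.2 - 3/2), sq_nonneg x.1, sq_nonneg x.2.1]

lemma gg_nonneg (x : G) : 0 ≤ gg x := by
  have := WW_pos x
  unfold gg; positivity

lemma half_log_le {Q m K : ℝ} (hK : 3 ≤ K) (hQ : K^2 ≤ Q) (hm : Q ≤ K * m) :
    3 ≤ m ∧ Real.log Q / 2 ≤ Real.log m := by
  have hm1 : K ≤ m := by
    by_contra h
    push Not at h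
    nlinarith
  have hm3 : 3 ≤ m := by linarith
  refine ⟨hm3, ?_⟩
  have h : Q ≤ m^2 := by nlinarith
  have := Real.log_le_log (by nlinarith) h
  rw [Real.log_pow] at this
  push_cast at this
  linarith

lemma heatK_le_HH {t : ℝ} (ht : 0 < t) {y : G} (hb : 0 < y.2.2) (hD : 1 < coshArg y) :
    heatK t y ≤ y.2.2⁻¹ * HH t (coshArg y) := by
  rw [heatK_eq hb hD]
  apply mul_le_of_le_one_left _ c0_le
  have := HH_nonneg ht hD.le
  positivity

lemma FF_nonneg {t : ℝ} (ht : 0 < t) (x : G) : 0 ≤ FF t x := by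
  apply setIntegral_nonneg (measurableSet_EE x)
  intro y hy
  exact heatK_nonneg ht hy.1

lemma FF_far {t : ℝ} (ht : 0 < t) {x : G} (ha : 0 < x.2.2) (hQ : 378^2 ≤ QQ x) :
    FF t x ≤ 10^8 * gg x := by
  have hQ3 := three_le_QQ ha
  have hl := one_le_log hQ3
  have hW := WW_pos x
  have bnd : ∀ y ∈ EE x, ‖heatK t y‖ ≤ 299376 * gg x := by
    intro y hy
    have hb := hy.1
    obtain ⟨hD3, hlD⟩ := half_log_le (by norm_num) hQ (EE_cosh ha hy).1
    rw [Real.norm_of_nonneg (heatK_nonneg ht hb)]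
    have hDQ : QQ x / 378 ≤ coshArg y := by linarith [(EE_cosh ha hy).1]
    calc heatK t y ≤ y.2.2⁻¹ * HH t (coshArg y) := heatK_le_HH ht hb (by linarith)
      _ ≤ (3/x.2.2) * (66 / (coshArg y * Real.log (coshArg y)^2)) := by
          gcongr
          · exact HH_nonneg ht (by linarith)
          · exact inv_b_le ha hy
          · exact HH_le ht hD3
      _ ≤ (3/x.2.2) * (66 / ((QQ x / 378) * (Real.log (QQ x) / 2)^2)) := by gcongr
      _ = 299376 * gg x := by
          have : WW x = QQ x * x.2.2 := by unfold QQ; field_simp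
          unfold gg; rw [this]; field_simp; norm_num
  have := norm_setIntegral_le_of_norm_le_const (EE_finite ha) bnd
  calc FF t x ≤ ‖FF t x‖ := Real.le_norm_self _
    _ ≤ 299376 * gg x * ρG.real (EE x) := this
    _ ≤ 299376 * gg x * 288 := by
        have := gg_nonneg x
        gcongr
        exact EE_real ha
    _ ≤ _ := by nlinarith [gg_nonneg x]

lemma rG_sq_ge {y : G} (hb : 0 < y.2.2) {K : ℝ} (hK : coshArg y ≤ K) :
    1/(16*K^3) * ((y.2.2-1)^2 + y.1^2 + y.2.1^2) ≤ rG y ^ 2 := by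
  have hD := one_le_coshArg hb
  have e := coshArg_eq hb
  have hb2 : y.2.2 ≤ 2*K := by
    have : y.2.2/2 ≤ coshArg y := by
      unfold coshArg
      have : 0 ≤ y.2.2⁻¹ * (y.1 ^ 2 + y.2.1 ^ 2) := by positivity
      have : 0 ≤ y.2.2⁻¹ := by positivity
      linarith
    linarith
  set S := (y.2.2-1)^2 + y.1^2 + y.2.1^2
  have hS : 0 ≤ S := by positivity
  rw [rG_eq]
  set D := coshArg y
  have hK0 : 0 < K := by linarith
  have h1 : S / (4*K) ≤ D - 1 := by
    rw [e, add_sub_cancel_left]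
    exact div_le_div_of_nonneg_left hS (by positivity) (by linarith)
  have hs : √(D^2-1)^2 = D^2-1 := Real.sq_sqrt (by nlinarith)
  have hs0 := Real.sqrt_nonneg (D^2-1)
  have h2 : √(D^2-1) / (2*D) ≤ Real.arcosh D := by
    unfold Real.arcosh
    have := Real.one_sub_inv_le_log_of_pos (x := D + √(D^2-1)) (by linarith)
    refine le_trans ?_ this
    have hsD : √(D^2-1) ≤ D := by rw [Real.sqrt_le_left (by linarith)]; linarith
    have : √(D^2-1)/(2*D) ≤ (D + √(D^2-1) - 1) / (D + √(D^2-1)) := by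
      apply div_le_div₀ <;> linarith
    refine this.trans (le_of_eq ?_)
    field_simp
  have h3 : (√(D^2-1) / (2*D))^2 ≤ Real.arcosh D^2 := by gcongr
  refine le_trans ?_ h3
  rw [div_pow, hs]
  calc 1/(16*K^3)*S = (S/(4*K)) / (2*K)^2 := by field_simp; ring
    _ ≤ (D^2-1)/(2*D)^2 := by
      gcongr
      · nlinarith
      · nlinarith

lemma gauss_int {k : ℝ} (hk : 0 < k) (u : ℝ) : Integrable (fun y : ℝ => Real.exp (-k*(y-u)^2)) ∧
    ∫ y : ℝ, Real.exp (-k*(y-u)^2) = √(π/k) := by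
  constructor
  · exact (integrable_exp_neg_mul_sq hk).comp_sub_right u
  · rw [integral_sub_right_eq_self (fun y => Real.exp (-k*y^2)) u, integral_gaussian]

lemma FF_near (K : ℝ) (hK : 1 ≤ K) : ∃ C > 0, ∀ t > 0, ∀ x : G, 0 < x.2.2 → 8 * QQ x ≤ K → FF t x ≤ C := by
  refine ⟨4*K^2 * (√(64*K^3*π))^3, by positivity, ?_⟩
  intro t ht x ha hQ
  set k := 1/(16*K^3)/(4*t) with hk
  have hk0 : 0 < k := by positivity
  obtain ⟨i1, e1⟩ := gauss_int hk0 0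
  obtain ⟨i2, e2⟩ := gauss_int hk0 1
  have hI : Integrable (fun y : G => 4*K^2*(√t^3)⁻¹ * (Real.exp (-k*(y.1-0)^2) * (Real.exp (-k*(y.2.1-0)^2) * Real.exp (-k*(y.2.2-1)^2)))) := by
    apply Integrable.const_mul
    exact i1.mul_prod (i1.mul_prod i2)
  have hFF : FF t x = ∫ y : G, dens y.2.2 * (EE x).indicator (heatK t) y := by
    unfold FF
    rw [← integral_indicator (measurableSet_EE x), integral_ρG]
  have hle : FF t x ≤ ∫ y : G, 4*K^2*(√t^3)⁻¹ * (Real.exp (-k*(y.1-0)^2) * (Real.exp (-k*(y.2.1-0)^2) * Real.exp (-k*(y.2.2-1)^2))) := by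
    rw [hFF]
    refine integral_mono_of_nonneg (f := fun y : G => dens y.2.2 * (EE x).indicator (heatK t) y) ?_ hI ?_
    swap
    · filter_upwards with y
      by_cases hy : y ∈ EE x
      · rw [Set.indicator_of_mem hy, dens, if_pos hy.1]
        have hb := hy.1
        have hDK : coshArg y ≤ K := (EE_cosh ha hy).2.trans hQ
        have hr := rG_sq_ge hb hDK
        have hbi : y.2.2⁻¹ ≤ 2*K := by
          have : y.2.2⁻¹/2 ≤ coshArg y := by
            unfold coshArg
            have : 0 ≤ y.2.2⁻¹ * (y.1 ^ 2 + y.2.1 ^ 2) := by positivity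
            linarith
          linarith
        calc y.2.2⁻¹ * heatK t y ≤ (2*K) * ((2*K) * tf t (rG y)) := by
              gcongr
              · exact heatK_nonneg ht hb
              · refine (heatK_le ht hb).trans ?_
                gcongr
                exact tf_nonneg ht
          _ = 4*K^2*(√t^3)⁻¹ * Real.exp (-(rG y^2)/(4*t)) := by
              rw [tf, rpow_neg_three_half ht]; ring
          _ ≤ 4*K^2*(√t^3)⁻¹ * Real.exp (-(1/(16*K^3) * ((y.2.2-1)^2 + y.1^2 + y.2.1^2))/(4*t)) := by gcongr
          _ = _ := by
              rw [← Real.exp_add, ← Real.exp_add, hk]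
              congr 2
              ring
      · rw [Set.indicator_of_notMem hy, mul_zero]; positivity
    · filter_upwards with y
      by_cases hy : y ∈ EE x
      · rw [Set.indicator_of_mem hy]
        exact mul_nonneg (dens_nonneg _) (heatK_nonneg ht hy.1)
      · rw [Set.indicator_of_notMem hy, mul_zero]; simp
  refine hle.trans (le_of_eq ?_)
  rw [integral_const_mul, Measure.volume_eq_prod, integral_prod_mul (fun y : ℝ => Real.exp (-k*(y-0)^2))
    (fun q : ℝ × ℝ => Real.exp (-k*(q.1-0)^2) * Real.exp (-k*(q.2-1)^2)),
    Measure.volume_eq_prod, integral_prod_mul (fun y : ℝ => Real.exp (-k*(y-0)^2))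
    (fun y : ℝ => Real.exp (-k*(y-1)^2)), e1, e2]
  have : π/k = (64*K^3*π) * t := by rw [hk]; field_simp; norm_num
  rw [this, Real.sqrt_mul (by positivity)]
  have := Real.sqrt_pos.2 ht
  field_simp

lemma FF_bound : ∃ C > 0, ∀ t > 0, ∀ x : G, 0 < x.2.2 → FF t x ≤ C * gg x := by
  obtain ⟨C, hC, h⟩ := FF_near (8*378^2) (by norm_num)
  refine ⟨C * (378^2)^4 + 10^8, by positivity, ?_⟩
  intro t ht x ha
  have hg := gg_nonneg x
  rcases le_total (378^2) (QQ x) with hQ | hQ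
  · have := FF_far ht ha hQ
    have : 0 ≤ C * (378^2)^4 * gg x := by positivity
    linarith
  · have h1 := h t ht x ha (by linarith)
    have hQ3 := three_le_QQ ha
    have hW := WW_pos x
    have hWQ : WW x = QQ x * x.2.2 := by unfold QQ; field_simp
    have haQ : x.2.2 ≤ QQ x := by
      unfold QQ WW
      rw [le_div_iff₀ ha]
      nlinarith [sq_nonneg x.1, sq_nonneg x.2.1]
    have hl := one_le_log hQ3
    have hlQ : Real.log (QQ x) ≤ QQ x := Real.log_le_self (by linarith)
    have : 1 ≤ (378^2)^4 * gg x := by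
      unfold gg
      rw [mul_one_div, le_div_iff₀ (by positivity), one_mul, hWQ]
      calc QQ x * x.2.2 * Real.log (QQ x)^2 ≤ (378^2) * (378^2) * (378^2)^2 := by
            have := haQ.trans hQ
            have := hlQ.trans hQ
            gcongr
        _ = _ := by norm_num
    nlinarith

/-- shear -/
def sh (s : ℝ) (y : G) : G := (y.1 - s * y.2.2, y.2.1, y.2.2)

lemma sh_mp (s : ℝ) : MeasurePreserving (sh s) volume volume := by
  have h1 : MeasurePreserving (fun p : (ℝ × ℝ) × ℝ => (p.1, p.2 - s * p.1.2))
      ((volume : Measure (ℝ × ℝ)).prod volume) ((volume : Measure (ℝ × ℝ)).prod volume) := by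
    apply (MeasurePreserving.id (volume : Measure (ℝ × ℝ))).skew_product (g := fun (q : ℝ × ℝ) (y : ℝ) => y - s * q.2)
    · fun_prop
    · filter_upwards with q
      exact (measurePreserving_sub_right volume _).map_eq
  have h2 : MeasurePreserving (Prod.swap : ℝ × (ℝ × ℝ) → (ℝ × ℝ) × ℝ) (volume.prod volume) (volume.prod volume) := Measure.measurePreserving_swap
  have h3 : MeasurePreserving (Prod.swap : (ℝ × ℝ) × ℝ → ℝ × (ℝ × ℝ)) (volume.prod volume) (volume.prod volume) := Measure.measurePreserving_swap
  exact h3.comp (h1.comp h2)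

lemma sh_emb (s : ℝ) : MeasurableEmbedding (sh s) := by
  apply (sh_mp s).measurable.measurableEmbedding
  intro p q h
  simp only [sh, Prod.mk.injEq] at h
  obtain ⟨h1, h2, h3⟩ := h
  refine Prod.ext ?_ (Prod.ext h2 h3)
  rw [h3] at h1
  linarith

lemma sh_mem {L : ℝ} {x y : G} (ha : 0 < x.2.2) : sh (L/x.2.2) y ∈ EE (tr L x) ↔ y ∈ EE x := by
  have : 0 < y.2.2 → gMul (tr L x) (gInv (sh (L/x.2.2) y)) = gMul x (gInv y) := by
    intro hb
    simp only [gMul, gInv, sh, tr, Prod.mk.injEq, and_true]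
    field_simp
    ring
  constructor
  · intro h
    exact ⟨h.1, by rw [← this h.1]; exact h.2⟩
  · intro h
    exact ⟨h.1, by rw [this h.1]; exact h.2⟩

lemma FF_tr {t L : ℝ} {x : G} (ha : 0 < x.2.2) :
    FF t (tr L x) = ∫ y in EE x, heatK t (sh (L/x.2.2) y) ∂ρG := by
  unfold FF
  rw [← integral_indicator (measurableSet_EE x), ← integral_indicator (measurableSet_EE _), integral_ρG,
    integral_ρG, ← (sh_mp (L/x.2.2)).integral_comp (sh_emb _)]
  congr 1; ext y
  have : (sh (L/x.2.2) y).2.2 = y.2.2 := rfl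
  rw [this]
  by_cases hy : y ∈ EE x
  · rw [Set.indicator_of_mem hy, Set.indicator_of_mem ((sh_mem ha).2 hy)]
  · rw [Set.indicator_of_notMem hy, Set.indicator_of_notMem (fun h => hy ((sh_mem ha).1 h))]

lemma integrableOn_heatK_sh {t L : ℝ} (ht : 0 < t) {x : G} (ha : 0 < x.2.2) :
    IntegrableOn (fun y => heatK t (sh (L/x.2.2) y)) (EE x) ρG := by
  apply Measure.integrableOn_of_bounded (M := 3/x.2.2 * t ^ (-(3:ℝ)/2)) (EE_finite ha).ne
  · exact ((measurable_heatK t).comp (sh_mp _).measurable).aestronglyMeasurable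
  · filter_upwards [ae_restrict_mem (measurableSet_EE x)] with y hy
    have hb : 0 < (sh (L/x.2.2) y).2.2 := hy.1
    rw [Real.norm_of_nonneg (heatK_nonneg ht hb)]
    refine (heatK_le ht hb).trans ?_
    gcongr
    · exact tf_nonneg ht
    · exact (inv_b_le ha hy : y.2.2⁻¹ ≤ _)
    · exact tf_le_const ht _

lemma normG_sq (x : G) : normG x ^ 2 = x.1^2 + x.2.1^2 := Real.sq_sqrt (by positivity)
lemma normG_nonneg (x : G) : 0 ≤ normG x := Real.sqrt_nonneg _
lemma abs_le_normG (x : G) : |x.1| ≤ normG x := Real.abs_le_sqrt (by nlinarith [sq_nonneg x.2.1])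

lemma heat_diff {t L : ℝ} (ht : 0 < t) (hL : 756^2 ≤ L) {x : G} (ha : 0 < x.2.2)
    (h4 : 4*L ≤ normG x) (han : x.2.2 ≤ normG x) {y : G} (hy : y ∈ EE x) :
    |heatK t (sh (L/x.2.2) y) - heatK t y| ≤ (2000*756^2*4*21) * (L / normG x * gg x) := by
  have hQ3 := three_le_QQ ha
  have hl := one_le_log hQ3
  have hW := WW_pos x
  set y' := sh (L/x.2.2) y with hy'
  have hy'E : y' ∈ EE (tr L x) := (sh_mem ha).2 hy
  have hN := normG_sq x
  have hn1 := abs_le_normG x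
  set n := normG x with hn
  have hL0 : 0 < L := by linarith
  have hn0 : 0 < n := by linarith
  have hnW : n^2 ≤ WW x := by rw [hN]; unfold WW; nlinarith [sq_nonneg x.2.2]
  have hQn : n ≤ QQ x := by
    unfold QQ; rw [le_div_iff₀ ha]; nlinarith
  have hQ : 756^2 ≤ QQ x := by linarith
  have hQ2 : QQ x ≤ 2 * QQ (tr L x) := by
    have : WW x ≤ 2 * WW (tr L x) := by
      simp only [WW, tr]
      have := (abs_le.1 hn1).2
      nlinarith [sq_nonneg x.2.2]
    have e2 : (tr L x).2.2 = x.2.2 := rfl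
    unfold QQ
    rw [e2, ← mul_div_assoc]
    gcongr
  have ha' : 0 < (tr L x).2.2 := ha
  have hD := (EE_cosh ha hy).1
  have hD' := (EE_cosh ha' hy'E).1
  have hb : 0 < y.2.2 := hy.1
  have hb' : 0 < y'.2.2 := hy.1
  obtain ⟨m, hm⟩ : ∃ m, m = QQ x / 756 := ⟨_, rfl⟩
  obtain ⟨hm3, hlm⟩ := half_log_le (Q := QQ x) (m := m) (K := 756) (by norm_num) hQ (by rw [hm]; linarith)
  have hmD : m ≤ coshArg y := by rw [hm]; linarith
  have hmD' : m ≤ coshArg y' := by rw [hm]; linarith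
  have hdiff : |coshArg y' - coshArg y| ≤ 7*L*n/x.2.2 := by
    obtain ⟨h0, h1, -, h3, h5⟩ := EE_coord ha hy
    obtain ⟨c, hc⟩ : ∃ c, c = x.2.2 / y.2.2 := ⟨_, rfl⟩
    rw [← hc] at h1 h3 h5
    have hc0 : 0 < c := by linarith
    have hbc : y.2.2 = x.2.2 / c := by rw [hc]; field_simp
    have e : coshArg y' - coshArg y = (L/(2*x.2.2)) * (L/c - 2 * y.1) := by
      simp only [coshArg, hy', sh]
      rw [hbc]
      field_simp
      ring
    rw [e, abs_mul, abs_of_pos (by positivity)]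
    have hLc : L/c ≤ n := by
      rw [div_le_iff₀ hc0]
      nlinarith
    have hLc0 : 0 < L/c := by positivity
    have hy1 : |y.1| ≤ 6*n := by
      have : |c*y.1| ≤ n + 1 := by
        have := abs_sub_abs_le_abs_sub (c*y.1) x.1
        rw [abs_sub_comm] at this
        linarith
      rw [abs_mul, abs_of_pos hc0] at this
      have h7 : 0 ≤ |y.1| := abs_nonneg _
      nlinarith
    have : |L/c - 2*y.1| ≤ 14*n := by
      rw [abs_le] at hy1 ⊢
      constructor <;> linarith [hy1.1, hy1.2]
    calc L/(2*x.2.2) * |L/c - 2*y.1| ≤ L/(2*x.2.2) * (14*n) := by gcongr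
      _ = _ := by field_simp; norm_num
  rw [heatK_eq hb' (by linarith), heatK_eq hb (by linarith)]
  have e2 : y'.2.2 = y.2.2 := rfl
  rw [e2, ← mul_sub, ← mul_sub, abs_mul, abs_of_pos c0_pos, abs_mul, abs_of_pos (by positivity : 0 < y.2.2⁻¹)]
  have hbi := inv_b_le ha hy
  have hH := HH_sub_le ht hm3 hmD' hmD
  have hWQ : WW x = QQ x * x.2.2 := by unfold QQ; field_simp
  calc _ ≤ 1 * ((3/x.2.2) * (2000 / ((QQ x/756)^2 * (Real.log (QQ x) / 2)^2) * (7*L*n/x.2.2))) := by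
        gcongr
        · exact c0_le
        · refine hH.trans ?_
          rw [hm] at hlm ⊢
          gcongr
    _ = (2000*756^2*4*21) * (L * n / (WW x ^ 2 * Real.log (QQ x)^2)) := by
        rw [hWQ]; field_simp; norm_num
    _ ≤ _ := by
        have : L * n / (WW x ^ 2 * Real.log (QQ x)^2) = (L / n * gg x) * (n^2 / WW x) := by
          unfold gg; field_simp
        rw [this]
        have h9 : n^2/WW x ≤ 1 := by rw [div_le_one hW]; exact hnW
        have : 0 ≤ L/n * gg x := by have := gg_nonneg x; positivity
        nlinarith

lemma conv_diff : ∃ C > 0, ∀ L : ℝ, 756^2 ≤ L → ∀ t > 0, ∀ x : G, 0 < x.2.2 → 4*L ≤ normG x → x.2.2 ≤ normG x →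
    |convHeat (fL L) t x| ≤ C * (L / normG x * gg x) := by
  refine ⟨(2000*756^2*4*21) * 288, by norm_num, ?_⟩
  intro L hL t ht x ha h4 han
  rw [conv_fL ht L ha, FF_tr ha, FF, ← integral_sub (integrableOn_heatK_sh ht ha) (integrableOn_heatK ht ha)]
  have := norm_setIntegral_le_of_norm_le_const (μ := ρG) (EE_finite ha) (f := fun y => heatK t (sh (L/x.2.2) y) - heatK t y)
    (fun y hy => heat_diff ht hL ha h4 han hy)
  rw [Real.norm_eq_abs] at this
  refine this.trans ?_
  have h1 := EE_real ha
  have h2 : 0 ≤ L / normG x * gg x := by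
    have := gg_nonneg x
    have : 0 ≤ L := by linarith
    have := normG_nonneg x
    positivity
  calc _ ≤ (2000*756^2*4*21) * (L / normG x * gg x) * 288 := by gcongr
    _ = _ := by ring

def ggn (n a : ℝ) : ℝ := 1 / ((3 + a^2 + n^2) * Real.log ((3+a^2+n^2)/a)^2)

lemma gg_eq (x : G) : gg x = ggn (normG x) x.2.2 := by
  unfold gg ggn QQ WW; rw [normG_sq]

lemma ggn_nonneg (n a : ℝ) : 0 ≤ ggn n a := by unfold ggn; positivity

lemma measurable_ggn : Measurable fun p : ℝ × ℝ => ggn p.1 p.2 := by unfold ggn; fun_prop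

@[fun_prop]
lemma measurable_normG : Measurable normG := by unfold normG; fun_prop

lemma lintegral_dens (k : ℝ → ℝ≥0∞) : ∫⁻ a, ENNReal.ofReal (dens a) * k a = ∫⁻ a in Ioi 0, ENNReal.ofReal (a⁻¹) * k a := by
  rw [← lintegral_indicator measurableSet_Ioi]
  congr 1; ext a
  by_cases h : 0 < a
  · rw [Set.indicator_of_mem (show a ∈ Ioi (0:ℝ) from h), dens, if_pos h]
  · rw [Set.indicator_of_notMem (show a ∉ Ioi (0:ℝ) from h), dens, if_neg h]; simp

lemma polar_radial (Φ : ℝ → ℝ≥0∞) (hΦ : Measurable Φ) :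
    ∫⁻ p : ℝ × ℝ, Φ (√(p.1^2+p.2^2)) = ∫⁻ n in Ioi (0:ℝ), ENNReal.ofReal (2*π*n) * Φ n := by
  rw [← lintegral_comp_polarCoord_symm]
  have h1 : ∫⁻ p in polarCoord.target, ENNReal.ofReal p.1 • Φ (√((polarCoord.symm p).1^2+(polarCoord.symm p).2^2))
      = ∫⁻ p in polarCoord.target, ENNReal.ofReal p.1 * Φ p.1 := by
    apply setLIntegral_congr_fun polarCoord.open_target.measurableSet
    intro p hp
    have hp1 : 0 < p.1 := hp.1
    simp only [polarCoord_symm_apply, smul_eq_mul]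
    have : (p.1 * Real.cos p.2)^2 + (p.1*Real.sin p.2)^2 = p.1^2 := by
      have := Real.cos_sq_add_sin_sq p.2
      calc _ = p.1^2 * (Real.cos p.2^2 + Real.sin p.2^2) := by ring
        _ = _ := by rw [this, mul_one]
    rw [this, Real.sqrt_sq hp1.le]
  rw [h1, polarCoord_target, Measure.volume_eq_prod, ← Measure.prod_restrict, lintegral_prod _ (by fun_prop)]
  apply lintegral_congr
  intro n
  simp only [lintegral_const, MeasurableSet.univ, Measure.restrict_apply, univ_inter, Real.volume_Ioo]
  rw [show π - -π = 2*π by ring, ENNReal.ofReal_mul (p := 2*π) (q := n) (by positivity)]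
  ring

lemma lintegral_radial (h : ℝ × ℝ → ℝ≥0∞) (hh : Measurable h) :
    ∫⁻ x, h (normG x, x.2.2) ∂ρG =
      ∫⁻ n in Ioi (0:ℝ), ENNReal.ofReal (2*π*n) * ∫⁻ a in Ioi (0:ℝ), ENNReal.ofReal a⁻¹ * h (n, a) := by
  rw [lintegral_ρG _ (by fun_prop)]
  have hm : Measurable fun n => ∫⁻ a, ENNReal.ofReal (dens a) * h (n, a) := by
    apply Measurable.lintegral_prod_right' (f := fun p : ℝ × ℝ => ENNReal.ofReal (dens p.2) * h p)
    fun_prop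
  simp_rw [← lintegral_dens]
  rw [← polar_radial _ hm, Measure.volume_eq_prod, lintegral_prod _ (by fun_prop), Measure.volume_eq_prod, lintegral_prod _ (by fun_prop)]
  apply lintegral_congr
  intro x1
  rw [lintegral_prod _ (by fun_prop)]
  rfl

lemma exp_subst (k : ℝ → ℝ≥0∞) : ∫⁻ a in Ioi (0:ℝ), ENNReal.ofReal a⁻¹ * k a = ∫⁻ u : ℝ, k (Real.exp u) := by
  have := lintegral_image_eq_lintegral_abs_deriv_mul (s := univ) (f := Real.exp) (f' := Real.exp) MeasurableSet.univ
    (fun x _ => (Real.hasDerivAt_exp x).hasDerivWithinAt) Real.exp_injective.injOn (fun a => ENNReal.ofReal a⁻¹ * k a)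
  rw [image_univ, Real.range_exp] at this
  rw [this, Measure.restrict_univ]
  apply lintegral_congr
  intro u
  rw [← mul_assoc, ← ENNReal.ofReal_mul (abs_nonneg _), abs_of_pos (Real.exp_pos u), mul_inv_cancel₀ (Real.exp_pos u).ne']
  simp

lemma lint_Iic {l : ℝ} (hl : 0 < l) : ∫⁻ u in Iic (l/2), ENNReal.ofReal (1/(l-u)^2) = ENNReal.ofReal (2/l) := by
  have hd : ∀ u ∈ Iic (l/2), HasDerivAt (fun u => (l-u)⁻¹) (1/(l-u)^2) u := by
    intro u hu
    have hu' : u ≤ l/2 := hu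
    have hne : l - u ≠ 0 := by
      have : 0 < l - u := by linarith
      exact this.ne'
    have h := ((hasDerivAt_id' u).const_sub l).fun_inv hne
    rw [neg_neg] at h
    exact h
  have ht : Tendsto (fun u => (l-u)⁻¹) atBot (nhds 0) := by
    apply Tendsto.comp tendsto_inv_atTop_zero
    exact tendsto_atTop_add_const_left _ _ tendsto_neg_atBot_atTop
  have hi : IntegrableOn (fun u => 1/(l-u)^2) (Iic (l/2)) := by
    have := integrableOn_Ioi_rpow_of_lt (a := -2) (by norm_num) (show (0:ℝ) < l/4 by linarith)
    have h2 : IntegrableOn (fun v : ℝ => v^(-2:ℝ)) (Ici (l/2)) :=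
      this.mono_set (fun v hv => by
        have : l/2 ≤ v := hv
        simp only [mem_Ioi]; linarith)
    have h3 := ((Measure.measurePreserving_sub_left (volume : Measure ℝ) l).integrableOn_comp_preimage
      (Homeomorph.subLeft l).measurableEmbedding).2 h2
    have e : (fun x => l - x) ⁻¹' Ici (l/2) = Iic (l/2) := by
      ext u; simp only [mem_preimage, mem_Ici, mem_Iic]
      constructor <;> intro h <;> linarith
    rw [e] at h3
    apply h3.congr_fun _ measurableSet_Iic
    intro u hu
    have hu' : u ≤ l/2 := hu
    have : 0 < l - u := by linarith
    simp only [Function.comp]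
    rw [Real.rpow_neg this.le, one_div]; norm_num
  rw [← ofReal_integral_eq_lintegral_ofReal hi (by
    filter_upwards with u
    positivity)]
  rw [integral_Iic_of_hasDerivAt_of_tendsto' hd hi ht]
  congr 1
  field_simp; ring

lemma inner_bound {n : ℝ} (hn : 0 < n) :
    ∫⁻ a in Ioi (0:ℝ), ENNReal.ofReal a⁻¹ * (if a ≤ n then ENNReal.ofReal (ggn n a) else 0)
      ≤ ENNReal.ofReal (2 / ((3+n^2) * Real.log (3+n^2))) := by
  rw [exp_subst (fun a => if a ≤ n then ENNReal.ofReal (ggn n a) else 0)]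
  obtain ⟨w, hw⟩ : ∃ w, w = 3 + n^2 := ⟨_, rfl⟩
  have hw3 : 3 ≤ w := by rw [hw]; nlinarith
  have hl := one_le_log hw3
  rw [← hw]
  set l := Real.log w with hlw
  calc _ ≤ ∫⁻ u, (Iic (l/2)).indicator (fun u => ENNReal.ofReal (1/w) * ENNReal.ofReal (1/(l-u)^2)) u := by
        apply lintegral_mono
        intro u
        dsimp only
        split_ifs with hu
        · have hul : u ≤ l/2 := by
            have h1 : Real.exp u ^ 2 ≤ w := by
              rw [hw]
              have := pow_le_pow_left₀ (Real.exp_pos u).le hu 2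
              linarith
            have h2 := Real.log_le_log (by positivity) h1
            rw [Real.log_pow, Real.log_exp] at h2
            push_cast at h2
            linarith
          rw [Set.indicator_of_mem (show u ∈ Iic (l/2) from hul), ← ENNReal.ofReal_mul (by positivity)]
          apply ENNReal.ofReal_le_ofReal
          unfold ggn
          rw [one_div_mul_one_div]
          have hlog : l - u ≤ Real.log ((3 + Real.exp u^2+n^2)/Real.exp u) := by
            rw [Real.log_div (by positivity) (by positivity), Real.log_exp]
            have : l ≤ Real.log (3 + Real.exp u^2+n^2) := by
              apply Real.log_le_log (by linarith)
              rw [hw]; nlinarith [sq_nonneg (Real.exp u)]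
            linarith
          have : 0 < l - u := by linarith
          have : w ≤ 3 + Real.exp u^2+n^2 := by rw [hw]; nlinarith [sq_nonneg (Real.exp u)]
          gcongr
        · exact zero_le
    _ = ENNReal.ofReal (1/w) * ENNReal.ofReal (2/l) := by
        rw [lintegral_indicator measurableSet_Iic, lintegral_const_mul _ (by fun_prop), lint_Iic (by linarith)]
    _ = _ := by
        rw [← ENNReal.ofReal_mul (by positivity)]
        congr 1; field_simp

/-- region `n < 2a`. -/
def h1 (p : ℝ × ℝ) : ℝ≥0∞ := if p.1 < 2*p.2 then ENNReal.ofReal (ggn p.1 p.2) else 0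
/-- region `2a ≤ n < 5L`. -/
def h2 (L : ℝ) (p : ℝ × ℝ) : ℝ≥0∞ := if 2*p.2 ≤ p.1 ∧ p.1 < 5*L then ENNReal.ofReal (ggn p.1 p.2) else 0
/-- region `4L ≤ n`, `a ≤ n`. -/
def h3 (L : ℝ) (p : ℝ × ℝ) : ℝ≥0∞ := if 4*L ≤ p.1 ∧ p.2 ≤ p.1 then ENNReal.ofReal (L / p.1 * ggn p.1 p.2) else 0

@[fun_prop]
lemma measurable_h1 : Measurable h1 := by
  apply Measurable.ite
  · exact measurableSet_lt (by fun_prop) (by fun_prop)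
  · exact measurable_ggn.ennreal_ofReal
  · fun_prop
@[fun_prop]
lemma measurable_h2 (L : ℝ) : Measurable (h2 L) := by
  apply Measurable.ite
  · apply MeasurableSet.inter
    · exact measurableSet_le (f := fun p : ℝ × ℝ => 2*p.2) (g := fun p => p.1) (by fun_prop) (by fun_prop)
    · exact measurableSet_lt (f := fun p : ℝ × ℝ => p.1) (g := fun p => 5*L) (by fun_prop) (by fun_prop)
  · exact measurable_ggn.ennreal_ofReal
  · fun_prop
@[fun_prop]
lemma measurable_h3 (L : ℝ) : Measurable (h3 L) := by
  apply Measurable.ite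
  · apply MeasurableSet.inter
    · exact measurableSet_le (f := fun p : ℝ × ℝ => 4*L) (g := fun p => p.1) (by fun_prop) (by fun_prop)
    · exact measurableSet_le (f := fun p : ℝ × ℝ => p.2) (g := fun p => p.1) (by fun_prop) (by fun_prop)
  · apply Measurable.ennreal_ofReal
    exact Measurable.mul (by fun_prop) measurable_ggn
  · fun_prop

lemma log_lower (u : ℝ) : (1+|u|)/2 ≤ Real.log ((3 + Real.exp u^2)/Real.exp u) := by
  have hp := Real.exp_pos u
  have key : Real.exp (1+|u|) ≤ ((3 + Real.exp u^2)/Real.exp u)^2 := by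
    rw [div_pow, le_div_iff₀ (by positivity), Real.exp_add]
    have he := e_lt
    have he0 := Real.exp_pos 1
    rcases le_total 0 u with h | h
    · rw [abs_of_nonneg h]
      calc Real.exp 1 * Real.exp u * Real.exp u^2 ≤ 3 * Real.exp u * Real.exp u^2 := by gcongr
        _ ≤ _ := by nlinarith [sq_nonneg (Real.exp u - 3/2), sq_nonneg (Real.exp u), mul_nonneg (sq_nonneg (Real.exp u)) (sq_nonneg (Real.exp u - 3/2))]
    · rw [abs_of_nonpos h]
      have h1 : Real.exp u ≤ 1 := Real.exp_le_one_iff.2 h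
      calc Real.exp 1 * Real.exp (-u) * Real.exp u^2 = Real.exp 1 * Real.exp u := by
            rw [Real.exp_neg]; field_simp
        _ ≤ 3 * 1 := by gcongr
        _ ≤ _ := by nlinarith [sq_nonneg (Real.exp u)]
  have := Real.log_le_log (Real.exp_pos _) key
  rw [Real.log_exp, Real.log_pow] at this
  push_cast at this
  linarith

lemma int_h1 : ∫⁻ x, h1 (normG x, x.2.2) ∂ρG ≤ ENNReal.ofReal (128*π) := by
  rw [lintegral_radial _ measurable_h1]
  let k : ℝ → ℝ → ℝ≥0∞ := fun n a => ENNReal.ofReal (2*π*n) * (ENNReal.ofReal a⁻¹ * h1 (n, a))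
  have hk : Measurable (Function.uncurry k) := by
    show Measurable fun p : ℝ × ℝ => ENNReal.ofReal (2*π*p.1) * (ENNReal.ofReal p.2⁻¹ * h1 (p.1, p.2))
    fun_prop
  have e1 : ∀ n : ℝ, ENNReal.ofReal (2*π*n) * ∫⁻ a in Ioi (0:ℝ), ENNReal.ofReal a⁻¹ * h1 (n, a)
      = ∫⁻ a in Ioi (0:ℝ), k n a := by
    intro n
    rw [← lintegral_const_mul _ (by fun_prop)]
  simp_rw [e1]
  rw [lintegral_lintegral_swap hk.aemeasurable]
  calc _ ≤ ∫⁻ a in Ioi (0:ℝ), ENNReal.ofReal a⁻¹ * ENNReal.ofReal (32 / Real.log ((3+a^2)/a)^2) := by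
        apply setLIntegral_mono' measurableSet_Ioi
        intro a ha
        have ha : 0 < a := ha
        have hl : 1 ≤ Real.log ((3+a^2)/a) := by
          apply one_le_log
          rw [le_div_iff₀ ha]; nlinarith [sq_nonneg (a-3/2)]
        calc ∫⁻ n in Ioi (0:ℝ), k n a ≤ ∫⁻ n in Ioi (0:ℝ), (Ioo 0 (2*a)).indicator (fun _ => ENNReal.ofReal a⁻¹ * ENNReal.ofReal (4*π*a*(1/((3+a^2)*Real.log ((3+a^2)/a)^2)))) n := by
              apply setLIntegral_mono' measurableSet_Ioi
              intro n hn
              have hn : 0 < n := hn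
              by_cases h : n < 2*a
              · rw [Set.indicator_of_mem (show n ∈ Ioo 0 (2*a) from ⟨hn, h⟩)]
                simp only [k, h1, if_pos h]
                have hg : ggn n a ≤ 1/((3+a^2)*Real.log ((3+a^2)/a)^2) := by
                  unfold ggn
                  have hm : 3 + a^2 ≤ 3+a^2+n^2 := by nlinarith
                  have : Real.log ((3+a^2)/a) ≤ Real.log ((3+a^2+n^2)/a) := by
                    apply Real.log_le_log (by positivity)
                    gcongr
                  gcongr
                have hb : 2*π*n*ggn n a ≤ 4*π*a*(1/((3+a^2)*Real.log ((3+a^2)/a)^2)) := by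
                  calc 2*π*n*ggn n a ≤ 2*π*(2*a)*(1/((3+a^2)*Real.log ((3+a^2)/a)^2)) :=
                        mul_le_mul (mul_le_mul_of_nonneg_left h.le (by positivity)) hg (ggn_nonneg _ _) (by positivity)
                    _ = _ := by ring
                rw [mul_left_comm, ← ENNReal.ofReal_mul (by positivity)]
                exact mul_le_mul_right (ENNReal.ofReal_le_ofReal hb) _
              · simp [k, h1, h]
          _ ≤ ∫⁻ n, (Ioo 0 (2*a)).indicator (fun _ => ENNReal.ofReal a⁻¹ * ENNReal.ofReal (4*π*a*(1/((3+a^2)*Real.log ((3+a^2)/a)^2)))) n := 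
              setLIntegral_le_lintegral _ _
          _ = ENNReal.ofReal a⁻¹ * ENNReal.ofReal (4*π*a*(1/((3+a^2)*Real.log ((3+a^2)/a)^2))) * ENNReal.ofReal (2*a) := by
              rw [lintegral_indicator measurableSet_Ioo, setLIntegral_const, Real.volume_Ioo, sub_zero]
          _ ≤ _ := by
              rw [mul_assoc, ← ENNReal.ofReal_mul (by positivity)]
              gcongr
              have : 4*π*a*(1/((3+a^2)*Real.log ((3+a^2)/a)^2)) * (2*a) = (8*π*a^2/(3+a^2)) / Real.log ((3+a^2)/a)^2 := by
                field_simp; ring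
              rw [this]
              gcongr
              rw [div_le_iff₀ (by positivity)]
              nlinarith [Real.pi_lt_four, sq_nonneg a]
    _ = ∫⁻ u : ℝ, ENNReal.ofReal (32 / Real.log ((3+Real.exp u^2)/Real.exp u)^2) := exp_subst _
    _ ≤ ∫⁻ u : ℝ, ENNReal.ofReal (128 * (1+u^2)⁻¹) := by
        apply lintegral_mono
        intro u
        apply ENNReal.ofReal_le_ofReal
        have h := log_lower u
        have h0 := abs_nonneg u
        calc 32 / Real.log ((3+Real.exp u^2)/Real.exp u)^2 ≤ 32 / ((1+|u|)/2)^2 := by gcongr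
          _ = 128 / (1+|u|)^2 := by field_simp; norm_num
          _ ≤ 128 / (1+u^2) := by
              gcongr
              rw [← sq_abs u]; nlinarith
          _ = _ := by ring
    _ = ENNReal.ofReal (128*π) := by
        rw [← ofReal_integral_eq_lintegral_ofReal (integrable_inv_one_add_sq.const_mul _) (by
          filter_upwards with u
          positivity), integral_const_mul, integral_univ_inv_one_add_sq]

lemma int_h3 {L : ℝ} (hL : 1 ≤ L) : ∫⁻ x, h3 L (normG x, x.2.2) ∂ρG ≤ ENNReal.ofReal π := by
  rw [lintegral_radial _ (measurable_h3 L)]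
  calc _ ≤ ∫⁻ n in Ioi (0:ℝ), (Ici (4*L)).indicator (fun n => ENNReal.ofReal (4*π*L * n^(-2:ℝ))) n := by
        apply setLIntegral_mono' measurableSet_Ioi
        intro n hn
        have hn : 0 < n := hn
        by_cases h : 4*L ≤ n
        · rw [Set.indicator_of_mem (show n ∈ Ici (4*L) from h)]
          have : ∀ a, ENNReal.ofReal a⁻¹ * h3 L (n, a) = ENNReal.ofReal (L/n) * (ENNReal.ofReal a⁻¹ * (if a ≤ n then ENNReal.ofReal (ggn n a) else 0)) := by
            intro a
            simp only [h3, h, true_and]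
            split_ifs
            · rw [ENNReal.ofReal_mul (by positivity)]; ring
            · simp
          simp_rw [this]
          rw [lintegral_const_mul' _ _ ENNReal.ofReal_ne_top]
          calc _ ≤ ENNReal.ofReal (2*π*n) * (ENNReal.ofReal (L/n) * ENNReal.ofReal (2 / ((3+n^2) * Real.log (3+n^2)))) := by
                gcongr
                exact inner_bound hn
            _ = ENNReal.ofReal (2*π*n*(L/n * (2 / ((3+n^2) * Real.log (3+n^2))))) := by
                rw [← ENNReal.ofReal_mul (by positivity), ← ENNReal.ofReal_mul (by positivity)]
            _ ≤ _ := by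
                apply ENNReal.ofReal_le_ofReal
                have hl : 1 ≤ Real.log (3+n^2) := one_le_log (by nlinarith)
                have : 2 / ((3+n^2) * Real.log (3+n^2)) ≤ 2 / (n^2*1) := by
                  gcongr; linarith
                calc 2*π*n*(L/n * (2 / ((3+n^2) * Real.log (3+n^2)))) ≤ 2*π*n*(L/n * (2 / (n^2*1))) := by gcongr
                  _ = 4*π*L*n^(-2:ℝ) := by
                    rw [Real.rpow_neg hn.le]; norm_num; field_simp; norm_num
        · rw [Set.indicator_of_notMem (show n ∉ Ici (4*L) from h)]
          simp [h3, h]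
    _ ≤ ∫⁻ n, (Ici (4*L)).indicator (fun n => ENNReal.ofReal (4*π*L * n^(-2:ℝ))) n := setLIntegral_le_lintegral _ _
    _ = ∫⁻ n in Ioi (4*L), ENNReal.ofReal (4*π*L * n^(-2:ℝ)) := by
        rw [lintegral_indicator measurableSet_Ici, setLIntegral_congr Ioi_ae_eq_Ici]
    _ = ENNReal.ofReal π := by
        rw [← ofReal_integral_eq_lintegral_ofReal ((integrableOn_Ioi_rpow_of_lt (by norm_num) (by linarith)).const_mul _) (by
          filter_upwards [ae_restrict_mem measurableSet_Ioi] with n hn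
          have : 0 < n := by have : 4*L < n := hn; linarith
          positivity), integral_const_mul, integral_Ioi_rpow_of_lt (by norm_num) (by linarith)]
        congr 1
        have : (-2:ℝ)+1 = -1 := by norm_num
        rw [this, Real.rpow_neg_one]
        field_simp

lemma int_h2 {L : ℝ} (hL : 1 ≤ L) : ∫⁻ x, h2 L (normG x, x.2.2) ∂ρG ≤
    ENNReal.ofReal (2*π*Real.log (Real.log (3+(5*L)^2))) := by
  rw [lintegral_radial _ (measurable_h2 L)]
  have hl : ∀ n : ℝ, 1 ≤ Real.log (3+n^2) := fun n => one_le_log (by nlinarith)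
  have hcont : Continuous fun n : ℝ => 2*π*(2*n / ((3+n^2) * Real.log (3+n^2))) := by
    apply continuous_const.mul
    apply Continuous.div (by fun_prop)
    · apply Continuous.mul (by fun_prop)
      apply Continuous.log (by fun_prop)
      intro n; positivity
    · intro n
      have := hl n
      positivity
  calc _ ≤ ∫⁻ n in Ioi (0:ℝ), (Ioc 0 (5*L)).indicator (fun n => ENNReal.ofReal (2*π*(2*n / ((3+n^2) * Real.log (3+n^2))))) n := by
        apply setLIntegral_mono' measurableSet_Ioi
        intro n hn
        have hn : 0 < n := hn
        by_cases h : n < 5*L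
        · rw [Set.indicator_of_mem (show n ∈ Ioc 0 (5*L) from ⟨hn, h.le⟩)]
          calc _ ≤ ENNReal.ofReal (2*π*n) * ENNReal.ofReal (2 / ((3+n^2) * Real.log (3+n^2))) := by
                gcongr
                refine le_trans ?_ (inner_bound hn)
                apply setLIntegral_mono' measurableSet_Ioi
                intro a ha
                have ha : 0 < a := ha
                gcongr
                simp only [h2]
                split_ifs with q1 q2
                · exact le_rfl
                · exact absurd (by linarith [q1.1]) q2
                · exact zero_le
                · exact zero_le
            _ = _ := by
                rw [← ENNReal.ofReal_mul (by positivity)]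
                congr 1; ring
        · simp [h2, h]
    _ ≤ ∫⁻ n, (Ioc 0 (5*L)).indicator (fun n => ENNReal.ofReal (2*π*(2*n / ((3+n^2) * Real.log (3+n^2))))) n := setLIntegral_le_lintegral _ _
    _ = ENNReal.ofReal (∫ n in (0)..(5*L), 2*π*(2*n / ((3+n^2) * Real.log (3+n^2)))) := by
        rw [lintegral_indicator measurableSet_Ioc, intervalIntegral.integral_of_le (by linarith),
          ofReal_integral_eq_lintegral_ofReal]
        · exact (hcont.intervalIntegrable 0 (5*L)).1
        · filter_upwards [ae_restrict_mem measurableSet_Ioc] with n hn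
          have h0 : 0 < n := hn.1
          have := hl n
          positivity
    _ ≤ _ := by
        apply ENNReal.ofReal_le_ofReal
        rw [intervalIntegral.integral_const_mul]
        have hd : ∀ n ∈ uIcc 0 (5*L), HasDerivAt (fun n : ℝ => Real.log (Real.log (3+n^2))) (2*n / ((3+n^2) * Real.log (3+n^2))) n := by
          intro n _
          have := hl n
          have h1 := (((hasDerivAt_pow 2 n).const_add 3).log (by positivity)).log (by positivity)
          convert h1 using 1
          field_simp
          push_cast; ring
        rw [intervalIntegral.integral_eq_sub_of_hasDerivAt hd]
        · have := Real.log_nonneg (hl 0)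
          have hpi := Real.pi_pos
          gcongr
          linarith
        · have : Continuous fun n : ℝ => (2*π)⁻¹ * (2*π*(2*n / ((3+n^2) * Real.log (3+n^2)))) := continuous_const.mul hcont
          have e : (fun n : ℝ => (2*π)⁻¹ * (2*π*(2*n / ((3+n^2) * Real.log (3+n^2))))) = fun n => (2*n / ((3+n^2) * Real.log (3+n^2))) := by
            ext n
            rw [← mul_assoc, inv_mul_cancel₀ (by positivity), one_mul]
          rw [e] at this
          exact this.intervalIntegrable _ _

lemma lintegral_tr (L : ℝ) (h : ℝ × ℝ → ℝ≥0∞) (hh : Measurable h) :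
    ∫⁻ x, h (normG (tr L x), x.2.2) ∂ρG = ∫⁻ x, h (normG x, x.2.2) ∂ρG := by
  have htr : Measurable (tr L) := by unfold tr; fun_prop
  rw [lintegral_ρG _ (by fun_prop), lintegral_ρG _ (by fun_prop)]
  haveI i0 : (volume : Measure (ℝ × ℝ)).IsAddHaarMeasure :=
    inferInstanceAs ((volume : Measure ℝ).prod (volume : Measure ℝ)).IsAddHaarMeasure
  haveI i1 : (volume : Measure G).IsAddHaarMeasure :=
    inferInstanceAs ((volume : Measure ℝ).prod (volume : Measure (ℝ × ℝ))).IsAddHaarMeasure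
  haveI i2 : (volume : Measure G).IsAddLeftInvariant := i1.toIsAddLeftInvariant
  haveI i3 : (volume : Measure G).IsAddRightInvariant := inferInstance
  have := (measurePreserving_sub_right (volume : Measure G) ((L, 0, 0) : G)).lintegral_comp
    (f := fun x : G => ENNReal.ofReal (dens x.2.2) * h (normG x, x.2.2)) (by fun_prop)
  rw [← this]
  apply lintegral_congr
  intro x
  have e : x - ((L, 0, 0) : G) = tr L x := by
    unfold tr; ext <;> simp
  rw [e]
  rfl

lemma normG_tr_le {L : ℝ} (hL : 0 ≤ L) (x : G) : normG (tr L x) ≤ normG x + L := by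
  have h1 := normG_sq (tr L x)
  have h2 := normG_sq x
  have h3 := normG_nonneg x
  have h4 : -x.1 ≤ normG x := by
    apply Real.le_sqrt_of_sq_le
    nlinarith [sq_nonneg x.2.1]
  apply Real.sqrt_le_iff.2
  refine ⟨by positivity, ?_⟩
  simp only [tr]
  nlinarith [mul_le_mul_of_nonneg_left h4 hL]

lemma pointwise {C1 C2 L : ℝ} (hC1 : 0 < C1) (hC2 : 0 < C2) (hL : (756:ℝ)^2 ≤ L)
    (H1 : ∀ t > 0, ∀ x : G, 0 < x.2.2 → FF t x ≤ C1 * gg x)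
    (H2 : ∀ L : ℝ, 756^2 ≤ L → ∀ t > 0, ∀ x : G, 0 < x.2.2 → 4*L ≤ normG x → x.2.2 ≤ normG x →
      |convHeat (fL L) t x| ≤ C2 * (L / normG x * gg x))
    (x : G) (hx : 0 < x.2.2) :
    maxHeat (fL L) x ≤ ENNReal.ofReal C1 * ((h1 (normG x, x.2.2) + h2 L (normG x, x.2.2)) +
      (h1 (normG (tr L x), x.2.2) + h2 L (normG (tr L x), x.2.2))) +
      ENNReal.ofReal C2 * h3 L (normG x, x.2.2) := by
  have hL0 : 0 < L := lt_of_lt_of_le (by norm_num) hL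
  refine iSup₂_le fun t ht => ?_
  have hn := normG_nonneg x
  by_cases hc : 4*L ≤ normG x ∧ x.2.2 ≤ normG x
  · refine le_trans ?_ le_add_self
    have h := H2 L hL t ht x hx hc.1 hc.2
    simp only [h3, if_pos hc]
    rw [← gg_eq, ← ENNReal.ofReal_mul hC2.le]
    exact ENNReal.ofReal_le_ofReal h
  · refine le_trans ?_ le_self_add
    have hA : |convHeat (fL L) t x| ≤ C1 * (gg x + gg (tr L x)) := by
      rw [conv_fL ht L hx]
      have a1 := H1 t ht x hx
      have a2 := H1 t ht (tr L x) hx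
      have a3 := FF_nonneg ht x
      have a4 := FF_nonneg ht (tr L x)
      rw [abs_le]
      constructor <;> linarith [mul_nonneg hC1.le (gg_nonneg x), mul_nonneg hC1.le (gg_nonneg (tr L x))]
    have hB1 : ENNReal.ofReal (gg x) ≤ h1 (normG x, x.2.2) + h2 L (normG x, x.2.2) := by
      rw [gg_eq]
      by_cases hs : normG x < 2 * x.2.2
      · refine le_trans ?_ le_self_add
        simp only [h1, if_pos hs]; exact le_rfl
      · refine le_trans ?_ le_add_self
        have h4 : normG x < 4*L := by
          by_contra h4
          exact hc ⟨not_lt.1 h4, by linarith⟩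
        have : 2 * x.2.2 ≤ normG x ∧ normG x < 5*L := ⟨not_lt.1 hs, by linarith⟩
        simp only [h2, if_pos this]; exact le_rfl
    have hB2 : ENNReal.ofReal (gg (tr L x)) ≤ h1 (normG (tr L x), x.2.2) + h2 L (normG (tr L x), x.2.2) := by
      rw [gg_eq]
      have hnt := normG_tr_le hL0.le x
      change ENNReal.ofReal (ggn (normG (tr L x)) x.2.2) ≤ _
      by_cases hs : normG (tr L x) < 2 * x.2.2
      · refine le_trans ?_ le_self_add
        simp only [h1, if_pos hs]; exact le_rfl
      · refine le_trans ?_ le_add_self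
        have h4 : normG x < 4*L := by
          by_contra h4
          refine hc ⟨not_lt.1 h4, ?_⟩
          linarith
        have : 2 * x.2.2 ≤ normG (tr L x) ∧ normG (tr L x) < 5*L := ⟨not_lt.1 hs, by linarith⟩
        simp only [h2, if_pos this]; exact le_rfl
    calc ENNReal.ofReal |convHeat (fL L) t x| ≤ ENNReal.ofReal (C1 * (gg x + gg (tr L x))) := ENNReal.ofReal_le_ofReal hA
      _ = ENNReal.ofReal C1 * (ENNReal.ofReal (gg x) + ENNReal.ofReal (gg (tr L x))) := by
          rw [ENNReal.ofReal_mul hC1.le, ENNReal.ofReal_add (gg_nonneg _) (gg_nonneg _)]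
      _ ≤ _ := by gcongr

lemma loglog_bound {L : ℝ} (hL : (756:ℝ)^2 ≤ L) :
    1 ≤ Real.log (Real.log L) ∧ Real.log (Real.log (3+(5*L)^2)) ≤ 3 * Real.log (Real.log L) := by
  have hL0 : 0 < L := lt_of_lt_of_le (by norm_num) hL
  have h3 : 3 ≤ Real.log L := by
    have : (3:ℝ)^3 ≤ L := le_trans (by norm_num) hL
    have h := Real.log_le_log (by norm_num) this
    rw [Real.log_pow] at h
    have := one_le_log (le_refl (3:ℝ))
    push_cast at h; linarith
  have h1 : 1 ≤ Real.log (Real.log L) := one_le_log h3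
  refine ⟨h1, ?_⟩
  have hb : 3 + (5*L)^2 ≤ L^3 := by
    have : (26:ℝ) ≤ L := le_trans (by norm_num) hL
    nlinarith [mul_le_mul_of_nonneg_right this (sq_nonneg L)]
  have h4 : Real.log (3+(5*L)^2) ≤ 3 * Real.log L := by
    have h := Real.log_le_log (by positivity) hb
    rw [Real.log_pow] at h
    exact_mod_cast h
  have h5 : 1 ≤ Real.log (3+(5*L)^2) := one_le_log (by nlinarith)
  have h6 := Real.log_le_log (by linarith) h4
  rw [Real.log_mul (by norm_num) (by linarith)] at h6
  have h7 := Real.log_le_sub_one_of_pos (show (0:ℝ) < 3 by norm_num)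
  linarith

theorem maxHeat_fL_upper :
    ∃ C > (0 : ℝ), ∀ L : ℝ, C < L →
      ∫⁻ x, maxHeat (fL L) x ∂ρG ≤ ENNReal.ofReal (C * Real.log (Real.log L)) := by
  obtain ⟨C1, hC1, H1⟩ := FF_bound
  obtain ⟨C2, hC2, H2⟩ := conv_diff
  have hpi := Real.pi_pos
  refine ⟨756^2 + C1 * (2*(128*π + 6*π)) + C2*π, by positivity, fun L hCL => ?_⟩
  have hL : (756:ℝ)^2 ≤ L := by
    have : 0 ≤ C1 * (2*(128*π + 6*π)) + C2*π := by positivity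
    linarith
  have hL1 : 1 ≤ L := le_trans (by norm_num) hL
  obtain ⟨hl1, hl2⟩ := loglog_bound hL
  have htr : Measurable (tr L) := by unfold tr; fun_prop
  have i1 := int_h1
  have i2 := int_h2 hL1
  have i3 := int_h3 hL1
  have j1 := (lintegral_tr L h1 measurable_h1).trans_le i1
  have j2 := (lintegral_tr L (h2 L) (measurable_h2 L)).trans_le i2
  have i2p : 0 ≤ 2*π*Real.log (Real.log (3+(5*L)^2)) := by
    have h5 : 1 ≤ Real.log (3+(5*L)^2) := one_le_log (by nlinarith)
    have := Real.log_nonneg h5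
    positivity
  set B := 2*π*Real.log (Real.log (3+(5*L)^2)) with hB
  calc ∫⁻ x, maxHeat (fL L) x ∂ρG
      ≤ ∫⁻ x, (ENNReal.ofReal C1 * ((h1 (normG x, x.2.2) + h2 L (normG x, x.2.2)) +
      (h1 (normG (tr L x), x.2.2) + h2 L (normG (tr L x), x.2.2))) +
      ENNReal.ofReal C2 * h3 L (normG x, x.2.2)) ∂ρG := by
        apply lintegral_mono_ae
        filter_upwards [ae_pos_ρG] with x hx
        exact pointwise hC1 hC2 hL H1 H2 x hx
    _ = ENNReal.ofReal C1 * ((∫⁻ x, h1 (normG x, x.2.2) ∂ρG + ∫⁻ x, h2 L (normG x, x.2.2) ∂ρG) +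
          (∫⁻ x, h1 (normG (tr L x), x.2.2) ∂ρG + ∫⁻ x, h2 L (normG (tr L x), x.2.2) ∂ρG)) +
          ENNReal.ofReal C2 * ∫⁻ x, h3 L (normG x, x.2.2) ∂ρG := by
        rw [lintegral_add_left (by fun_prop), lintegral_const_mul _ (by fun_prop), lintegral_const_mul _ (by fun_prop),
          lintegral_add_left (by fun_prop), lintegral_add_left (by fun_prop), lintegral_add_left (by fun_prop)]
    _ ≤ ENNReal.ofReal C1 * ((ENNReal.ofReal (128*π) + ENNReal.ofReal B) + (ENNReal.ofReal (128*π) + ENNReal.ofReal B))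
          + ENNReal.ofReal C2 * ENNReal.ofReal π := by gcongr
    _ = ENNReal.ofReal (C1 * ((128*π + B) + (128*π+B)) + C2*π) := by
        rw [← ENNReal.ofReal_add (by positivity) i2p, ← ENNReal.ofReal_add (by positivity) (by positivity),
          ← ENNReal.ofReal_mul hC1.le, ← ENNReal.ofReal_mul hC2.le, ← ENNReal.ofReal_add (by positivity) (by positivity)]
    _ ≤ _ := by
        apply ENNReal.ofReal_le_ofReal
        have hB' : B ≤ 6*π*Real.log (Real.log L) := by
          rw [hB]
          nlinarith
        set l := Real.log (Real.log L)
        have a1 : C1 * ((128*π + B) + (128*π+B)) ≤ C1 * (2*(128*π + 6*π)) * l := by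
          rw [mul_assoc]
          apply mul_le_mul_of_nonneg_left _ hC1.le
          nlinarith
        have a2 : C2*π ≤ C2*π*l := le_mul_of_one_le_right (by positivity) hl1
        nlinarith
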